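/- Let r, q be nonzero complex numbers with q² ≠ 1 such that d := (r − r^{-1})/(q − q^{-1}) + 1 is nonzero. Then there exists a unique sequence of ℂ-linear functionals tr_n : D_n(r,q) → ℂ (n ≥ 1, with D_1(r,q) = ℂ) such that tr_1(1) = 1 and, for all n ≥ 2 and all a, b ∈ D_{n−1}(r,q): tr_n(ι(a)·ι(b)) = tr_{n−1}(ab), tr_n(ι(a)·T_{n−1}·ι(b)) = (r/d)·tr_{n−1}(ab), and tr_n(ι(a)·E_{n−1}·ι(b)) = (1/d)·tr_{n−1}(ab), where ι : D_{n−1}(r,q) → D_n(r,q) is the canonical homomorphism. Moreover each tr_n is a trace functional: tr_n(xy) = tr_n(yx) for all x, y ∈ D_n(r,q). -/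

import Mathlib

/-- Generators of the BMW algebra `D_n(r,q)`: the invertible generators `T_i`
(left summand) and their inverses `S_i = T_i⁻¹` (right summand), `1 ≤ i ≤ n-1`. -/
abbrev BMWGenerators (n : ℕ) := Fin (n - 1) ⊕ Fin (n - 1)

/-- The generator `T_i` in the free algebra. -/
def bmwT (n : ℕ) (i : Fin (n - 1)) : FreeAlgebra ℂ (BMWGenerators n) :=
  FreeAlgebra.ι ℂ (Sum.inl i)

/-- The generator `S_i = T_i⁻¹` in the free algebra. -/
def bmwS (n : ℕ) (i : Fin (n - 1)) : FreeAlgebra ℂ (BMWGenerators n) :=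
  FreeAlgebra.ι ℂ (Sum.inr i)

/-- The element `E_i = 1 - (T_i - S_i)/(q - q⁻¹)` in the free algebra. -/
noncomputable def bmwE (q : ℂ) (n : ℕ) (i : Fin (n - 1)) : FreeAlgebra ℂ (BMWGenerators n) :=
  1 - (q - q⁻¹)⁻¹ • (bmwT n i - bmwS n i)

/-- The defining relations of the BMW algebra `D_n(r,q)`. -/
inductive BMWRel (r q : ℂ) (n : ℕ) :
    FreeAlgebra ℂ (BMWGenerators n) → FreeAlgebra ℂ (BMWGenerators n) → Prop
  | inv_right (i : Fin (n - 1)) : BMWRel r q n (bmwT n i * bmwS n i) 1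
  | inv_left (i : Fin (n - 1)) : BMWRel r q n (bmwS n i * bmwT n i) 1
  | braid (i j : Fin (n - 1)) (h : (i : ℕ) + 1 = (j : ℕ)) :
      BMWRel r q n (bmwT n i * bmwT n j * bmwT n i) (bmwT n j * bmwT n i * bmwT n j)
  | comm (i j : Fin (n - 1)) (h : (i : ℕ) + 2 ≤ (j : ℕ)) :
      BMWRel r q n (bmwT n i * bmwT n j) (bmwT n j * bmwT n i)
  | eT (i : Fin (n - 1)) : BMWRel r q n (bmwE q n i * bmwT n i) (r⁻¹ • bmwE q n i)
  | eTe (i j : Fin (n - 1)) (h : (i : ℕ) + 1 = (j : ℕ)) :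
      BMWRel r q n (bmwE q n j * bmwT n i * bmwE q n j) (r • bmwE q n j)
  | eSe (i j : Fin (n - 1)) (h : (i : ℕ) + 1 = (j : ℕ)) :
      BMWRel r q n (bmwE q n j * bmwS n i * bmwE q n j) (r⁻¹ • bmwE q n j)

/-- The BMW algebra `D_n(r,q)`. -/
abbrev BMW (r q : ℂ) (n : ℕ) := RingQuot (BMWRel r q n)

/-- The generator `T_i` of `D_n(r,q)`. -/
noncomputable def BMW.T (r q : ℂ) (n : ℕ) (i : Fin (n - 1)) : BMW r q n :=
  RingQuot.mkAlgHom ℂ (BMWRel r q n) (bmwT n i)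

/-- The generator `S_i = T_i⁻¹` of `D_n(r,q)`. -/
noncomputable def BMW.S (r q : ℂ) (n : ℕ) (i : Fin (n - 1)) : BMW r q n :=
  RingQuot.mkAlgHom ℂ (BMWRel r q n) (bmwS n i)

/-- The element `E_i` of `D_n(r,q)`. -/
noncomputable def BMW.E (r q : ℂ) (n : ℕ) (i : Fin (n - 1)) : BMW r q n :=
  RingQuot.mkAlgHom ℂ (BMWRel r q n) (bmwE q n i)

/-- The defining conditions of the Markov trace on the tower of BMW algebras
`D_1 ⊂ D_2 ⊂ ⋯` (here `tr k` is the trace on `D_{k+1}(r,q)`, and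
`ι k : D_{k+1}(r,q) → D_{k+2}(r,q)` is the canonical inclusion):
`tr_1(1) = 1`, and for all `a, b ∈ D_{n-1}`, `tr_n(ι(a)ι(b)) = tr_{n-1}(ab)`,
`tr_n(ι(a)·T_{n-1}·ι(b)) = (r/d)·tr_{n-1}(ab)` and
`tr_n(ι(a)·E_{n-1}·ι(b)) = (1/d)·tr_{n-1}(ab)`,
where `d = (r - r⁻¹)/(q - q⁻¹) + 1`. -/
def IsMarkovTrace (r q : ℂ)
    (ι : ∀ k : ℕ, BMW r q (k + 1) →ₐ[ℂ] BMW r q (k + 2))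
    (tr : ∀ k : ℕ, BMW r q (k + 1) →ₗ[ℂ] ℂ) : Prop :=
  tr 0 1 = 1 ∧
    ∀ (k : ℕ) (a b : BMW r q (k + 1)),
      tr (k + 1) (ι k a * ι k b) = tr k (a * b) ∧
      tr (k + 1) (ι k a * BMW.T r q (k + 2) ⟨k, by omega⟩ * ι k b) =
        (r / ((r - r⁻¹) / (q - q⁻¹) + 1)) * tr k (a * b) ∧
      tr (k + 1) (ι k a * BMW.E r q (k + 2) ⟨k, by omega⟩ * ι k b) =
        (1 / ((r - r⁻¹) / (q - q⁻¹) + 1)) * tr k (a * b)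

set_option linter.unusedVariables false
set_option linter.unusedSectionVars false

/-! ## A concrete module of matchings with an action of framed tangles -/

/-- Parameters for the skein module. -/
class BPar where
  r : ℂ
  s : ℂ
  z : ℂ
  d : ℂ
  rs : r * s = 1
  zd : z * d = r - s + z

namespace BT

open BPar

/-- Index set for matchings of `2k` points. -/
def Idx : ℕ → Type
  | 0 => Unit
  | k + 1 => Fin (2 * k + 1) × Idx k

/-- The module with basis the matchings of `2k` points. -/
def M (k : ℕ) : Type := Idx k → ℂ

noncomputable instance (k : ℕ) : AddCommGroup (M k) := inferInstanceAs (AddCommGroup (Idx k → ℂ))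
noncomputable instance (k : ℕ) : Module ℂ (M k) := inferInstanceAs (Module ℂ (Idx k → ℂ))

/-- Insert an arc from the first point to slot `x`. -/
def θ {k : ℕ} (x : ℕ) : M k →ₗ[ℂ] M (k + 1) where
  toFun v := fun p : Fin (2 * k + 1) × Idx k => if (p.1 : ℕ) = x then v p.2 else 0
  map_add' u v := by
    funext p
    change (if _ then u _ + v _ else 0) = (if _ then _ else _) + (if _ then _ else _)
    split_ifs <;> simp
  map_smul' c v := by
    funext p
    change (if _ then c * v _ else 0) = c * (if _ then _ else _)
    split_ifs <;> simp

/-- Components. -/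
def pr {k : ℕ} (x : Fin (2 * k + 1)) : M (k + 1) →ₗ[ℂ] M k where
  toFun v := fun p => v (x, p)
  map_add' u v := rfl
  map_smul' c v := rfl

/-- Linear maps out of `M (k+1)` from its components. -/
noncomputable def lift {k : ℕ} {N : Type} [AddCommGroup N] [Module ℂ N] (F : ℕ → M k →ₗ[ℂ] N) :
    M (k + 1) →ₗ[ℂ] N := ∑ x : Fin (2 * k + 1), F x ∘ₗ pr x

theorem pr_θ {k : ℕ} (x : ℕ) (y : Fin (2 * k + 1)) (v : M k) :
    pr y (θ x v) = if (y : ℕ) = x then v else 0 := by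
  funext p
  change (if (y : ℕ) = x then v p else 0) = _
  split_ifs <;> rfl

theorem lift_θ {k : ℕ} {N : Type} [AddCommGroup N] [Module ℂ N] (F : ℕ → M k →ₗ[ℂ] N)
    (x : ℕ) (hx : x ≤ 2 * k) (v : M k) : lift F (θ x v) = F x v := by
  simp only [lift, LinearMap.sum_apply, LinearMap.comp_apply, pr_θ]
  rw [Finset.sum_eq_single ⟨x, by omega⟩]
  · simp
  · intro b _ hb
    rw [if_neg, map_zero]
    intro h
    exact hb (Fin.ext h)
  · simp

theorem sum_θ {k : ℕ} (v : M (k + 1)) :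
    v = ∑ x : Fin (2 * k + 1), θ (x : ℕ) (pr x v) := by
  have : ∀ p : Fin (2 * k + 1) × Idx k, (v : Fin (2 * k + 1) × Idx k → ℂ) p =
      ∑ x : Fin (2 * k + 1), (θ (x : ℕ) (pr x v) : Fin (2 * k + 1) × Idx k → ℂ) p := by
    intro p
    change _ = ∑ x : Fin (2 * k + 1), if (p.1 : ℕ) = x then v (x, p.2) else 0
    rw [Finset.sum_eq_single p.1]
    · simp
    · intro b _ hb
      rw [if_neg]
      intro h
      exact hb (Fin.ext h.symm)
    · simp
  funext p
  rw [this p]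
  exact (Finset.sum_apply (M := fun _ => ℂ) p Finset.univ _).symm

theorem ext_θ {k : ℕ} {N : Type} [AddCommGroup N] [Module ℂ N] (f g : M (k + 1) →ₗ[ℂ] N)
    (h : ∀ x, x ≤ 2 * k → ∀ v, f (θ x v) = g (θ x v)) (w : M (k + 1)) : f w = g w := by
  rw [sum_θ w, map_sum, map_sum]
  exact Finset.sum_congr rfl fun x _ => h x (by omega) _

/-- Insert a small arc at points `i, i+1`. -/
noncomputable def cup : {k : ℕ} → ℕ → M k →ₗ[ℂ] M (k + 1)
  | _, 0 => θ 0
  | 0, _ + 1 => 0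
  | k + 1, j + 1 => lift fun x =>
      if x < j then θ x ∘ₗ cup (k := k) (j - 1) else θ (x + 2) ∘ₗ cup (k := k) j

/-- `A 0 ∘ A 1 ∘ ⋯ ∘ A (j-1)`. -/
noncomputable def chD {k : ℕ} (A : ℕ → M k →ₗ[ℂ] M k) : ℕ → M k →ₗ[ℂ] M k
  | 0 => LinearMap.id
  | j + 1 => chD A j ∘ₗ A j

/-- `A (j-1) ∘ ⋯ ∘ A 0`. -/
noncomputable def chU {k : ℕ} (A : ℕ → M k →ₗ[ℂ] M k) : ℕ → M k →ₗ[ℂ] M k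
  | 0 => LinearMap.id
  | j + 1 => A j ∘ₗ chU A j

structure Ops (k : ℕ) where
  T : ℕ → M k →ₗ[ℂ] M k
  S : ℕ → M k →ₗ[ℂ] M k
  cap : ℕ → M (k + 1) →ₗ[ℂ] M k

variable [BPar]

noncomputable def cap0 {k : ℕ} (T : ℕ → M k →ₗ[ℂ] M k) : M (k + 1) →ₗ[ℂ] M k :=
  lift fun x => match x with
    | 0 => d • LinearMap.id
    | x + 1 => r • chU T x

noncomputable def capOf {k : ℕ} (T S : ℕ → M (k + 1) →ₗ[ℂ] M (k + 1))
    (c : ℕ → M (k + 1) →ₗ[ℂ] M k) : ℕ → M (k + 2) →ₗ[ℂ] M (k + 1)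
  | 0 => cap0 T
  | j + 1 => lift fun x =>
      if x < j then θ x ∘ₗ c (j - 1) else if x = j then chD S j
      else if x = j + 1 then s • chD S j else θ (x - 2) ∘ₗ c j

noncomputable def Tp {k : ℕ} (o : Ops k) (j : ℕ) : M (k + 1) →ₗ[ℂ] M (k + 1) :=
  lift fun x =>
    if x < j then θ x ∘ₗ o.T (j - 1) else if x = j then θ (j + 1)
    else if x = j + 1 then θ j + z • θ (j + 1) - (z * s) • cup (j + 1) ∘ₗ chD o.S j
    else θ x ∘ₗ o.T j

noncomputable def Sp {k : ℕ} (o : Ops k) (j : ℕ) : M (k + 1) →ₗ[ℂ] M (k + 1) :=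
  Tp o j - z • (LinearMap.id - cup (j + 1) ∘ₗ o.cap (j + 1))

noncomputable def Tof {k : ℕ} (o : Ops k) : ℕ → M (k + 1) →ₗ[ℂ] M (k + 1)
  | 0 => lift fun x => match x with
    | 0 => s • θ 0
    | x + 1 => chD (Sp o) x ∘ₗ cup (x + 1)
  | j + 1 => Tp o j

noncomputable def Sof {k : ℕ} (o : Ops k) (i : ℕ) : M (k + 1) →ₗ[ℂ] M (k + 1) :=
  Tof o i - z • (LinearMap.id - cup i ∘ₗ o.cap i)

/-- All the operators, by recursion. -/
noncomputable def ops : (k : ℕ) → Ops k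
  | 0 => ⟨0, 0, fun i => match i with
      | 0 => cap0 0
      | _ + 1 => 0⟩
  | k + 1 => ⟨Tof (ops k), Sof (ops k), capOf (Tof (ops k)) (Sof (ops k)) (ops k).cap⟩

noncomputable def T {k : ℕ} (i : ℕ) : M k →ₗ[ℂ] M k := (ops k).T i
noncomputable def S {k : ℕ} (i : ℕ) : M k →ₗ[ℂ] M k := (ops k).S i
noncomputable def cap {k : ℕ} (i : ℕ) : M (k + 1) →ₗ[ℂ] M k := (ops k).cap i
noncomputable def D (a : ℕ) {k : ℕ} (j : ℕ) : M k →ₗ[ℂ] M k := chD (fun i => S (i + a)) j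
noncomputable def U {k : ℕ} (j : ℕ) : M k →ₗ[ℂ] M k := chU T j

variable {k : ℕ}

@[simp] theorem D_zero (a : ℕ) (v : M k) : D a 0 v = v := rfl
theorem D_succ (a j : ℕ) (v : M k) : D a (j + 1) v = D a j (S (j + a) v) := rfl
theorem D_succ0 (j : ℕ) (v : M k) : D 0 (j + 1) v = D 0 j (S j v) := rfl
@[simp] theorem U_zero (v : M k) : U 0 v = v := rfl
theorem U_succ (j : ℕ) (v : M k) : U (j + 1) v = T j (U j v) := rfl

theorem S_def (i : ℕ) (v : M (k + 1)) : S i v = T i v - z • (v - cup i (cap i v)) := rfl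

theorem cup_zero (v : M k) : cup 0 v = θ 0 v := by
  cases k <;> simp only [cup]

theorem cup_lt (x j : ℕ) (h : x ≤ j) (hx : x ≤ 2 * k) (v : M k) :
    cup (j + 2) (θ x v) = θ x (cup j v) := by
  rw [cup, lift_θ _ _ hx, if_pos (by omega)]; rfl

theorem cup_ge (x j : ℕ) (h : j ≤ x) (hx : x ≤ 2 * k) (v : M k) :
    cup (j + 1) (θ x v) = θ (x + 2) (cup j v) := by
  rw [cup, lift_θ _ _ hx, if_neg (by omega)]; rfl

theorem cap_zz (v : M k) : cap 0 (θ 0 v) = d • v := by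
  cases k with
  | zero => exact lift_θ _ 0 (by omega) v
  | succ k => exact lift_θ _ 0 (by omega) v

theorem cap_zs (x : ℕ) (hx : x + 1 ≤ 2 * k) (v : M k) : cap 0 (θ (x + 1) v) = r • U x v := by
  cases k with
  | zero => omega
  | succ k => exact lift_θ _ (x + 1) hx v

theorem cap_lt (x j : ℕ) (h : x ≤ j) (hx : x ≤ 2 * k + 2) (v : M (k + 1)) :
    cap (j + 2) (θ x v) = θ x (cap j v) := by
  refine (lift_θ _ x (by omega) v).trans ?_
  rw [if_pos (by omega)]; rfl

theorem cap_eq (j : ℕ) (hx : j ≤ 2 * k + 2) (v : M (k + 1)) :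
    cap (j + 1) (θ j v) = D 0 j v := by
  refine (lift_θ _ j (by omega) v).trans ?_
  rw [if_neg (by omega), if_pos (by omega)]; rfl

theorem cap_eq1 (j : ℕ) (hx : j + 1 ≤ 2 * k + 2) (v : M (k + 1)) :
    cap (j + 1) (θ (j + 1) v) = s • D 0 j v := by
  refine (lift_θ _ (j + 1) (by omega) v).trans ?_
  rw [if_neg (by omega), if_neg (by omega), if_pos (by omega)]; rfl

theorem cap_gt (x j : ℕ) (h : j ≤ x) (hx : x + 2 ≤ 2 * k + 2) (v : M (k + 1)) :
    cap (j + 1) (θ (x + 2) v) = θ x (cap j v) := by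
  refine (lift_θ _ (x + 2) (by omega) v).trans ?_
  rw [if_neg (by omega), if_neg (by omega), if_neg (by omega)]; rfl

theorem T_zz (v : M k) : T 0 (θ 0 v) = s • θ 0 v := lift_θ _ 0 (by omega) v

theorem T_zs (x : ℕ) (hx : x + 1 ≤ 2 * k) (v : M k) :
    T 0 (θ (x + 1) v) = D 1 x (cup (x + 1) v) := lift_θ _ (x + 1) hx v

theorem T_lt (x j : ℕ) (h : x ≤ j) (hx : x ≤ 2 * k) (v : M k) :
    T (j + 2) (θ x v) = θ x (T j v) := by
  refine (lift_θ _ x (by omega) v).trans ?_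
  rw [if_pos (by omega)]; rfl

theorem T_eq (j : ℕ) (hx : j ≤ 2 * k) (v : M k) :
    T (j + 1) (θ j v) = θ (j + 1) v := by
  refine (lift_θ _ j (by omega) v).trans ?_
  rw [if_neg (by omega), if_pos (by omega)]

theorem T_eq1 (j : ℕ) (hx : j + 1 ≤ 2 * k) (v : M k) :
    T (j + 1) (θ (j + 1) v) =
      θ j v + z • θ (j + 1) v - (z * s) • cup (j + 1) (D 0 j v) := by
  refine (lift_θ _ (j + 1) (by omega) v).trans ?_
  rw [if_neg (by omega), if_neg (by omega), if_pos (by omega)]; rfl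

theorem T_gt (x j : ℕ) (h : j + 2 ≤ x) (hx : x ≤ 2 * k) (v : M k) :
    T (j + 1) (θ x v) = θ x (T j v) := by
  refine (lift_θ _ x (by omega) v).trans ?_
  rw [if_neg (by omega), if_neg (by omega), if_neg (by omega)]; rfl
/-! ### The relations, for generators of index at least `a` -/

structure TT (a k : ℕ) : Prop where
  TS : ∀ i, a ≤ i → i + 1 < 2 * k → ∀ v : M k, T i (S i v) = v
  ST : ∀ i, a ≤ i → i + 1 < 2 * k → ∀ v : M k, S i (T i v) = v
  comm : ∀ i j, a ≤ i → i + 2 ≤ j → j + 1 < 2 * k → ∀ v : M k, T i (T j v) = T j (T i v)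
  br : ∀ i, a ≤ i → i + 2 < 2 * k → ∀ v : M k,
    T i (T (i + 1) (T i v)) = T (i + 1) (T i (T (i + 1) v))

structure TL (a k : ℕ) : Prop where
  a0 : ∀ i, a ≤ i → i ≤ 2 * k → ∀ v : M k, cap i (cup i v) = d • v
  a1 : ∀ i, a ≤ i → i + 1 ≤ 2 * k → ∀ v : M k, cap i (cup (i + 1) v) = v
  a2 : ∀ i, a ≤ i → i + 1 ≤ 2 * k → ∀ v : M k, cap (i + 1) (cup i v) = v
  Tc : ∀ i, a ≤ i → i ≤ 2 * k → ∀ v : M k, T i (cup i v) = s • cup i v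
  cT : ∀ i, a ≤ i → i ≤ 2 * k → ∀ v : M (k + 1), cap i (T i v) = s • cap i v
  TC1 : ∀ i j, a ≤ i → i + 2 ≤ j → j ≤ 2 * k → ∀ v : M k, T i (cup j v) = cup j (T i v)
  TC2 : ∀ i j, a ≤ j → j ≤ i → i + 1 < 2 * k → ∀ v : M k, T (i + 2) (cup j v) = cup j (T i v)
  TK1 : ∀ i j, a ≤ i → i + 2 ≤ j → j ≤ 2 * k → ∀ v : M (k + 1), cap j (T i v) = T i (cap j v)
  TK2 : ∀ i j, a ≤ j → j ≤ i → i + 1 < 2 * k → ∀ v : M (k + 1),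
    cap j (T (i + 2) v) = T i (cap j v)
  s1 : ∀ i, a ≤ i → i + 1 ≤ 2 * k → ∀ v : M k, T i (T (i + 1) (cup i v)) = cup (i + 1) v
  s2 : ∀ i, a ≤ i → i + 1 ≤ 2 * k → ∀ v : M k, T (i + 1) (T i (cup (i + 1) v)) = cup i v
  s3 : ∀ i, a ≤ i → i + 1 ≤ 2 * k → ∀ v : M (k + 1), cap (i + 1) (T i (T (i + 1) v)) = cap i v
  s4 : ∀ i, a ≤ i → i + 1 ≤ 2 * k → ∀ v : M (k + 1), cap i (T (i + 1) (T i v)) = cap (i + 1) v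

structure KL (k : ℕ) : Prop where
  CC : ∀ i j, i ≤ j → j ≤ 2 * k → ∀ v : M k, cup (j + 2) (cup i v) = cup i (cup j v)
  KK : ∀ i j, i ≤ j → j ≤ 2 * k → ∀ v : M (k + 2), cap i (cap (j + 2) v) = cap j (cap i v)
  KC1 : ∀ i j, i ≤ j → j ≤ 2 * k → ∀ v : M (k + 1), cap (j + 2) (cup i v) = cup i (cap j v)
  KC2 : ∀ i j, i ≤ j → j ≤ 2 * k → ∀ v : M (k + 1), cap i (cup (j + 2) v) = cup j (cap i v)

theorem rs_smul {N : Type} [AddCommGroup N] [Module ℂ N] (v : N) : r • s • v = v := by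
  rw [smul_smul, rs, one_smul]

theorem sr_smul {N : Type} [AddCommGroup N] [Module ℂ N] (v : N) : s • r • v = v := by
  rw [smul_smul, mul_comm, rs, one_smul]

/-! ### Generic chain lemmas -/

theorem D_int {k l : ℕ} (f : M k →ₗ[ℂ] M l) (a b j : ℕ)
    (h : ∀ i, i < j → ∀ v, f (S (i + a) v) = S (i + b) (f v)) (v : M k) :
    f (D a j v) = D b j (f v) := by
  induction j generalizing v with
  | zero => rfl
  | succ j ih =>
    rw [D_succ, D_succ, ih (fun i hi => h i (by omega)), h j (by omega)]

theorem U_int {k l : ℕ} (f : M k →ₗ[ℂ] M l) (j : ℕ)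
    (h : ∀ i, i < j → ∀ v, f (T i v) = T i (f v)) (v : M k) :
    f (U j v) = U j (f v) := by
  induction j with
  | zero => rfl
  | succ j ih =>
    rw [U_succ, U_succ, h j (by omega), ih (fun i hi => h i (by omega))]

section derived

variable {a : ℕ}

theorem TT.ST_comm (h : TT a k) (i j : ℕ) (hi : a ≤ i) (hij : i + 2 ≤ j) (hj : j + 1 < 2 * k)
    (v : M k) : S i (T j v) = T j (S i v) := by
  conv_lhs => rw [← h.TS i hi (by omega) v]
  rw [← h.comm i j hi hij hj, h.ST i hi (by omega)]

theorem TT.TS_comm (h : TT a k) (i j : ℕ) (hi : a ≤ i) (hij : i + 2 ≤ j) (hj : j + 1 < 2 * k)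
    (v : M k) : T i (S j v) = S j (T i v) := by
  conv_rhs => rw [← h.TS j (by omega) (by omega) v]
  rw [h.comm i j hi hij hj, h.ST j (by omega) (by omega)]

theorem TT.SS_comm (h : TT a k) (i j : ℕ) (hi : a ≤ i) (hij : i + 2 ≤ j) (hj : j + 1 < 2 * k)
    (v : M k) : S i (S j v) = S j (S i v) := by
  conv_rhs => rw [← h.TS j (by omega) (by omega) v]
  rw [h.ST_comm i j hi hij hj, h.ST j (by omega) (by omega)]

/-- `S_i S_{i+1} T_i = T_{i+1} S_i S_{i+1}` -/
theorem TT.SST (h : TT a k) (i : ℕ) (hi : a ≤ i) (hj : i + 2 < 2 * k) (v : M k) :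
    S i (S (i + 1) (T i v)) = T (i + 1) (S i (S (i + 1) v)) := by
  have := h.br i hi hj (S i (S (i + 1) v))
  rw [h.TS i hi (by omega), h.TS (i + 1) (by omega) (by omega)] at this
  rw [this, h.ST (i + 1) (by omega) (by omega), h.ST i hi (by omega)]

variable (h0 : TT a k) (h1 : TT a (k + 1)) (hl : TL a k)

theorem Tsq (h1 : TT a (k + 1)) (hl : TL a k) (i : ℕ) (hi : a ≤ i) (hik : i ≤ 2 * k)
    (v : M (k + 1)) :
    T i (T i v) = v + z • T i v - (z * s) • cup i (cap i v) := by
  have h := h1.TS i hi (by omega) v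
  rw [S_def, map_sub, map_smul, map_sub, hl.Tc i hi hik] at h
  linear_combination (norm := module) h

theorem Sc (h1 : TT a (k + 1)) (hl : TL a k) (i : ℕ) (hi : a ≤ i) (hik : i ≤ 2 * k) (v : M k) :
    S i (cup i v) = r • cup i v := by
  have h := h1.ST i hi (by omega) (cup i v)
  rw [hl.Tc i hi hik, map_smul] at h
  conv_rhs => rw [← h]
  rw [rs_smul]

theorem cS (h1 : TT a (k + 1)) (hl : TL a k) (i : ℕ) (hi : a ≤ i) (hik : i ≤ 2 * k)
    (v : M (k + 1)) : cap i (S i v) = r • cap i v := by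
  conv_rhs => rw [← h1.TS i hi (by omega) v]
  rw [hl.cT i hi hik, rs_smul]

theorem SC1 (h0 : TT a k) (h1 : TT a (k + 1)) (hl : TL a k) (i j : ℕ) (hi : a ≤ i)
    (hij : i + 2 ≤ j) (hj : j ≤ 2 * k) (v : M k) : S i (cup j v) = cup j (S i v) := by
  conv_lhs => rw [← h0.TS i hi (by omega) v]
  rw [← hl.TC1 i j hi hij hj, h1.ST i hi (by omega)]

theorem SC2 (h0 : TT a k) (h1 : TT a (k + 1)) (hl : TL a k) (i j : ℕ) (hi : a ≤ j)
    (hij : j ≤ i) (hj : i + 1 < 2 * k) (v : M k) : S (i + 2) (cup j v) = cup j (S i v) := by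
  conv_lhs => rw [← h0.TS i (by omega) (by omega) v]
  rw [← hl.TC2 i j hi hij hj, h1.ST (i + 2) (by omega) (by omega)]

theorem SK1 (h0 : TT a k) (h1 : TT a (k + 1)) (hl : TL a k) (i j : ℕ) (hi : a ≤ i)
    (hij : i + 2 ≤ j) (hj : j ≤ 2 * k) (v : M (k + 1)) : cap j (S i v) = S i (cap j v) := by
  conv_rhs => rw [← h1.TS i hi (by omega) v]
  rw [hl.TK1 i j hi hij hj, h0.ST i hi (by omega)]

theorem SK2 (h0 : TT a k) (h1 : TT a (k + 1)) (hl : TL a k) (i j : ℕ) (hi : a ≤ j)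
    (hij : j ≤ i) (hj : i + 1 < 2 * k) (v : M (k + 1)) :
    cap j (S (i + 2) v) = S i (cap j v) := by
  conv_rhs => rw [← h1.TS (i + 2) (by omega) (by omega) v]
  rw [hl.TK2 i j hi hij hj, h0.ST i (by omega) (by omega)]

theorem Sl1 (h1 : TT a (k + 1)) (hl : TL a k) (i : ℕ) (hi : a ≤ i) (hik : i + 1 ≤ 2 * k)
    (v : M k) : S i (cup (i + 1) v) = T (i + 1) (cup i v) := by
  rw [← hl.s1 i hi hik, h1.ST i hi (by omega)]

theorem Sl2 (h1 : TT a (k + 1)) (hl : TL a k) (i : ℕ) (hi : a ≤ i) (hik : i + 1 ≤ 2 * k)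
    (v : M k) : S (i + 1) (cup i v) = T i (cup (i + 1) v) := by
  rw [← hl.s2 i hi hik, h1.ST (i + 1) (by omega) (by omega)]

theorem Sl3 (h1 : TT a (k + 1)) (hl : TL a k) (i : ℕ) (hi : a ≤ i) (hik : i + 1 ≤ 2 * k)
    (v : M k) : S i (S (i + 1) (cup i v)) = cup (i + 1) v := by
  rw [Sl2 h1 hl i hi hik, h1.ST i hi (by omega)]

theorem Kl1 (h1 : TT a (k + 1)) (hl : TL a k) (i : ℕ) (hi : a ≤ i) (hik : i + 1 ≤ 2 * k)
    (v : M (k + 1)) : cap i (S (i + 1) v) = cap (i + 1) (T i v) := by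
  rw [← hl.s3 i hi hik, h1.TS (i + 1) (by omega) (by omega)]

theorem Kl2 (h1 : TT a (k + 1)) (hl : TL a k) (i : ℕ) (hi : a ≤ i) (hik : i + 1 ≤ 2 * k)
    (v : M (k + 1)) : cap (i + 1) (S i v) = cap i (T (i + 1) v) := by
  rw [← hl.s4 i hi hik, h1.TS i (by omega) (by omega)]

theorem Kl3 (h1 : TT a (k + 1)) (hl : TL a k) (i : ℕ) (hi : a ≤ i) (hik : i + 1 ≤ 2 * k)
    (v : M (k + 1)) : cap (i + 1) (S i (S (i + 1) v)) = cap i v := by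
  rw [Kl2 h1 hl i hi hik, h1.TS (i + 1) (by omega) (by omega)]

theorem kTc1 (h1 : TT a (k + 1)) (hl : TL a k) (i : ℕ) (hi : a ≤ i) (hik : i + 1 ≤ 2 * k)
    (v : M k) : cap (i + 1) (T i (cup (i + 1) v)) = r • v := by
  rw [← Sl2 h1 hl i hi hik, cS h1 hl (i + 1) (by omega) hik, hl.a2 i hi hik]

theorem kTc2 (h1 : TT a (k + 1)) (hl : TL a k) (i : ℕ) (hi : a ≤ i) (hik : i + 1 ≤ 2 * k)
    (v : M k) : cap i (T (i + 1) (cup i v)) = r • v := by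
  rw [← Sl1 h1 hl i hi hik, cS h1 hl i (by omega) (by omega), hl.a1 i hi hik]

theorem kSc1 (h1 : TT a (k + 1)) (hl : TL a k) (i : ℕ) (hi : a ≤ i) (hik : i + 1 ≤ 2 * k)
    (v : M k) : cap (i + 1) (S i (cup (i + 1) v)) = s • v := by
  rw [Sl1 h1 hl i hi hik, hl.cT (i + 1) (by omega) hik, hl.a2 i hi hik]

/-! Naturality of `D`. -/

theorem D_T_far (h0 : TT a k) (i j : ℕ) (hij : j + a + 1 ≤ i) (hi : i + 1 < 2 * k) (v : M k) :
    D a j (T i v) = T i (D a j v) :=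
  (D_int (T i) a a j (fun l _ w =>
    (h0.ST_comm (l + a) i (by omega) (by omega) hi w).symm) v).symm

theorem D_S_far (h0 : TT a k) (i j : ℕ) (hij : j + a + 1 ≤ i) (hi : i + 1 < 2 * k) (v : M k) :
    D a j (S i v) = S i (D a j v) :=
  (D_int (S i) a a j (fun l _ w =>
    (h0.SS_comm (l + a) i (by omega) (by omega) hi w).symm) v).symm

theorem D_T_near (h0 : TT a k) (i j : ℕ) (hi : a ≤ i) (hij : i + 2 ≤ j + a)
    (hj : j + a < 2 * k) (v : M k) : D a j (T i v) = T (i + 1) (D a j v) := by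
  obtain ⟨i, rfl⟩ : ∃ i', i = i' + a := ⟨i - a, by omega⟩
  obtain ⟨n, rfl⟩ : ∃ n, j = i + 2 + n := ⟨j - (i + 2), by omega⟩
  clear hij
  induction n generalizing v with
  | zero =>
    simp only [Nat.add_zero]
    rw [D_succ, D_succ, D_succ, D_succ, Nat.add_right_comm i 1 a,
      h0.SST (i + a) hi (by omega), D_T_far h0 _ _ (by omega) (by omega)]
  | succ n ih =>
    rw [← Nat.add_assoc, D_succ, D_succ, ← h0.TS_comm _ _ hi (by omega) (by omega),
      ih _ (by omega)]

theorem D_cup_far (h0 : TT a k) (h1 : TT a (k + 1)) (hl : TL a k) (i j : ℕ)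
    (hij : j + a + 1 ≤ i) (hi : i ≤ 2 * k) (v : M k) :
    D a j (cup i v) = cup i (D a j v) :=
  (D_int (cup i) a a j (fun l _ w =>
    (SC1 h0 h1 hl (l + a) i (by omega) (by omega) hi w).symm) v).symm

theorem D_cup_near (h0 : TT a k) (h1 : TT a (k + 1)) (hl : TL a k) (i j : ℕ) (hi : a ≤ i)
    (hij : i ≤ j + a) (hj : j + a ≤ 2 * k - 1) (hk : 1 ≤ k) (v : M k) :
    D a (j + 2) (cup i v) = cup (i + 1) (D a j v) := by
  obtain ⟨i, rfl⟩ : ∃ i', i = i' + a := ⟨i - a, by omega⟩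
  obtain ⟨n, rfl⟩ : ∃ n, j = i + n := ⟨j - i, by omega⟩
  clear hij
  induction n generalizing v with
  | zero =>
    simp only [Nat.add_zero]
    rw [D_succ, D_succ, Nat.add_right_comm i 1 a,
      Sl3 h1 hl (i + a) hi (by omega), D_cup_far h0 h1 hl _ _ (by omega) (by omega)]
  | succ n ih =>
    rw [← Nat.add_assoc, D_succ, show i + n + 1 + 1 + a = (i + n + a) + 2 by omega,
      SC2 h0 h1 hl _ _ hi (by omega) (by omega), ih _ (by omega), D_succ a (i + n)]

theorem cap_D_far (h0 : TT a k) (h1 : TT a (k + 1)) (hl : TL a k) (i j : ℕ)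
    (hij : j + a + 1 ≤ i) (hi : i ≤ 2 * k) (v : M (k + 1)) :
    cap i (D a j v) = D a j (cap i v) :=
  D_int (cap i) a a j (fun l _ w => SK1 h0 h1 hl (l + a) i (by omega) (by omega) hi w) v

theorem cap_D_near (h0 : TT a k) (h1 : TT a (k + 1)) (hl : TL a k) (i j : ℕ) (hi : a ≤ i)
    (hij : i ≤ j + a) (hj : j + a ≤ 2 * k - 1) (hk : 1 ≤ k) (v : M (k + 1)) :
    cap (i + 1) (D a (j + 2) v) = D a j (cap i v) := by
  obtain ⟨i, rfl⟩ : ∃ i', i = i' + a := ⟨i - a, by omega⟩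
  obtain ⟨n, rfl⟩ : ∃ n, j = i + n := ⟨j - i, by omega⟩
  clear hij
  induction n generalizing v with
  | zero =>
    simp only [Nat.add_zero]
    rw [D_succ, D_succ, cap_D_far h0 h1 hl _ _ (by omega) (by omega),
      Nat.add_right_comm i 1 a, Kl3 h1 hl (i + a) hi (by omega)]
  | succ n ih =>
    rw [← Nat.add_assoc, D_succ, ih _ (by omega), show i + n + 1 + 1 + a = (i + n + a) + 2 by omega,
      SK2 h0 h1 hl _ _ hi (by omega) (by omega), D_succ a (i + n)]

/-- drag a small arc to the first point -/
theorem D_cup_eq (h1 : TT 0 (k + 1)) (hl : TL 0 k) (j : ℕ) (hj : j ≤ 2 * k) (v : M k) :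
    D 0 j (cup j v) = θ j v := by
  induction j with
  | zero => exact cup_zero v
  | succ j ih =>
    rw [D_succ0, Sl1 h1 hl j (by omega) hj, D_T_far h1 _ _ (by omega) (by omega),
      ih (by omega), T_eq j (by omega)]

/-! Naturality of `U`. -/

theorem U_T_far (h0 : TT 0 k) (i j : ℕ) (hij : j + 1 ≤ i) (hi : i + 1 < 2 * k) (v : M k) :
    U j (T i v) = T i (U j v) :=
  (U_int (T i) j (fun l _ w => (h0.comm l i (by omega) (by omega) hi w).symm) v).symm

theorem U_S_far (h0 : TT 0 k) (i j : ℕ) (hij : j + 1 ≤ i) (hi : i + 1 < 2 * k) (v : M k) :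
    U j (S i v) = S i (U j v) :=
  (U_int (S i) j (fun l _ w => (h0.TS_comm l i (by omega) (by omega) hi w).symm) v).symm

theorem U_T_near (h0 : TT 0 k) (i j : ℕ) (hij : i + 2 ≤ j) (hj : j < 2 * k) (v : M k) :
    U j (T (i + 1) v) = T i (U j v) := by
  obtain ⟨n, rfl⟩ : ∃ n, j = i + 2 + n := ⟨j - (i + 2), by omega⟩
  clear hij
  induction n with
  | zero =>
    simp only [Nat.add_zero]
    rw [U_succ, U_succ, U_succ, U_succ, U_T_far h0 _ _ (by omega) (by omega),
      h0.br i (by omega) (by omega)]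
  | succ n ih =>
    rw [← Nat.add_assoc, U_succ, U_succ, ih (by omega), ← h0.comm i (i + 2 + n) (by omega) (by omega) (by omega)]

theorem U_cup_far (hl : TL 0 k) (i j : ℕ) (hij : j + 1 ≤ i) (hi : i ≤ 2 * k) (v : M k) :
    U j (cup i v) = cup i (U j v) :=
  (U_int (cup i) j (fun l _ w => (hl.TC1 l i (by omega) (by omega) hi w).symm) v).symm

theorem U_cup_near (hl : TL 0 k) (i j : ℕ) (hij : i ≤ j) (hj : j + 1 ≤ 2 * k) (v : M k) :
    U (j + 2) (cup (i + 1) v) = cup i (U j v) := by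
  obtain ⟨n, rfl⟩ : ∃ n, j = i + n := ⟨j - i, by omega⟩
  clear hij
  induction n with
  | zero =>
    simp only [Nat.add_zero]
    rw [U_succ, U_succ, U_cup_far hl _ _ (by omega) (by omega),
      hl.s2 i (by omega) (by omega)]
  | succ n ih =>
    rw [← Nat.add_assoc, U_succ, ih (by omega), hl.TC2 _ _ (by omega) (by omega) (by omega)]
    rfl

theorem cap_U_far (hl : TL 0 k) (i j : ℕ) (hij : j + 1 ≤ i) (hi : i ≤ 2 * k) (v : M (k + 1)) :
    cap i (U j v) = U j (cap i v) :=
  U_int (cap i) j (fun l _ w => hl.TK1 l i (by omega) (by omega) hi w) v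

theorem cap_U_near (hl : TL 0 k) (i j : ℕ) (hij : i ≤ j) (hj : j + 1 ≤ 2 * k) (v : M (k + 1)) :
    cap i (U (j + 2) v) = U j (cap (i + 1) v) := by
  obtain ⟨n, rfl⟩ : ∃ n, j = i + n := ⟨j - i, by omega⟩
  clear hij
  induction n with
  | zero =>
    simp only [Nat.add_zero]
    rw [U_succ, U_succ, hl.s4 i (by omega) (by omega),
      cap_U_far hl _ _ (by omega) (by omega)]
  | succ n ih =>
    rw [← Nat.add_assoc, U_succ, hl.TK2 _ _ (by omega) (by omega) (by omega), ih (by omega)]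
    rfl

theorem U_θz (x : ℕ) (hx : x ≤ 2 * k) (v : M k) : U (x + 1) (θ 0 v) = s • θ x v := by
  induction x with
  | zero => exact T_zz v
  | succ x ih => rw [U_succ, ih (by omega), map_smul, T_eq x (by omega)]

theorem cap0_D (h1 : TT 0 (k + 1)) (hl : TL 0 k) (j : ℕ) (hj : j ≤ 2 * k) (v : M (k + 1)) :
    cap 0 (D 0 (j + 1) v) = r • cap j (U j v) := by
  induction j generalizing v with
  | zero => exact cS h1 hl 0 (by omega) (by omega) v
  | succ j ih =>
    rw [D_succ0, ih (by omega), U_S_far h1 _ _ (by omega) (by omega), Kl1 h1 hl _ (by omega) hj]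
    rfl

theorem T0_D (h0 : TT 0 k) (j : ℕ) (hj : 1 < 2 * k) (v : M k) :
    T 0 (D 0 (j + 1) v) = D 1 j v := by
  induction j generalizing v with
  | zero => exact h0.TS 0 (by omega) (by omega) v
  | succ j ih => rw [D_succ0, ih, D_succ]

end derived

/-! ### Far commutation of cups and caps -/

theorem KL_CC (hp : ∀ k', k = k' + 1 → KL k') (i j : ℕ) (hij : i ≤ j) (hj : j ≤ 2 * k) (v : M k) :
    cup (j + 2) (cup i v) = cup i (cup j v) := by
  rcases i with _ | i
  · rw [cup_zero, cup_zero, cup_lt 0 j (by omega) (by omega)]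
  obtain ⟨j, rfl⟩ : ∃ j', j = j' + 1 := ⟨j - 1, by omega⟩
  obtain ⟨k, rfl⟩ : ∃ k', k = k' + 1 := ⟨k - 1, by omega⟩
  have hp := hp k rfl
  refine ext_θ (cup (j + 3) ∘ₗ cup (i + 1)) (cup (i + 1) ∘ₗ cup (j + 1)) (fun x hx v => ?_) v
  simp only [LinearMap.comp_apply]
  rcases lt_or_ge x i with h | h
  · obtain ⟨n, rfl⟩ : ∃ n, i = n + 1 := ⟨i - 1, by omega⟩
    obtain ⟨m, rfl⟩ : ∃ n, j = n + 1 := ⟨j - 1, by omega⟩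
    rw [cup_lt x n (by omega) hx, cup_lt x (m + 2) (by omega) (by omega),
      cup_lt x m (by omega) (by omega), cup_lt x n (by omega) (by omega),
      hp.CC n m (by omega) (by omega)]
  rcases lt_or_ge x j with h' | h'
  · obtain ⟨m, rfl⟩ : ∃ n, j = n + 1 := ⟨j - 1, by omega⟩
    rw [cup_ge x i (by omega) hx, cup_lt (x + 2) (m + 2) (by omega) (by omega),
      cup_lt x m (by omega) (by omega), cup_ge x i (by omega) (by omega),
      hp.CC i m (by omega) (by omega)]
  · rw [cup_ge x i (by omega) hx, cup_ge (x + 2) (j + 2) (by omega) (by omega),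
      cup_ge x j (by omega) (by omega), cup_ge (x + 2) i (by omega) (by omega),
      hp.CC i j (by omega) (by omega)]

theorem KL_KC1 (h0 : TT 0 k) (h1 : TT 0 (k + 1)) (hl : TL 0 k) (hp : ∀ k', k = k' + 1 → KL k')
    (i j : ℕ) (hij : i ≤ j) (hj : j ≤ 2 * k) (v : M (k + 1)) :
    cap (j + 2) (cup i v) = cup i (cap j v) := by
  rcases i with _ | i
  · rw [cup_zero, cup_zero, cap_lt 0 j (by omega) (by omega)]
  obtain ⟨j, rfl⟩ : ∃ j', j = j' + 1 := ⟨j - 1, by omega⟩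
  obtain ⟨k, rfl⟩ : ∃ k', k = k' + 1 := ⟨k - 1, by omega⟩
  have hp := hp k rfl
  refine ext_θ (cap (j + 3) ∘ₗ cup (i + 1)) (cup (i + 1) ∘ₗ cap (j + 1)) (fun x hx v => ?_) v
  simp only [LinearMap.comp_apply]
  rcases lt_or_ge x i with h | h
  · obtain ⟨n, rfl⟩ : ∃ n, i = n + 1 := ⟨i - 1, by omega⟩
    obtain ⟨m, rfl⟩ : ∃ n, j = n + 1 := ⟨j - 1, by omega⟩
    rw [cup_lt x n (by omega) hx, cap_lt x (m + 2) (by omega) (by omega),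
      cap_lt x m (by omega) (by omega), cup_lt x n (by omega) (by omega),
      hp.KC1 n m (by omega) (by omega)]
  rw [cup_ge x i (by omega) hx]
  rcases lt_or_ge x j with h' | h'
  · obtain ⟨m, rfl⟩ : ∃ n, j = n + 1 := ⟨j - 1, by omega⟩
    rw [cap_lt (x + 2) (m + 2) (by omega) (by omega),
      cap_lt x m (by omega) (by omega), cup_ge x i (by omega) (by omega),
      hp.KC1 i m (by omega) (by omega)]
  rcases Nat.eq_or_lt_of_le h' with rfl | h'
  · rw [cap_eq (j + 2) (by omega), cap_eq j (by omega),
      D_cup_near h0 h1 hl i j (by omega) (by omega) (by omega) (by omega)]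
  rcases Nat.eq_or_lt_of_le h' with rfl | h'
  · rw [Nat.succ_eq_add_one, cap_eq1 (j + 2) (by omega), cap_eq1 j (by omega),
      D_cup_near h0 h1 hl i j (by omega) (by omega) (by omega) (by omega), map_smul]
  obtain ⟨x, rfl⟩ : ∃ n, x = n + 2 := ⟨x - 2, by omega⟩
  rw [cap_gt (x + 2) (j + 2) (by omega) (by omega), cap_gt x j (by omega) (by omega),
    cup_ge x i (by omega) (by omega), hp.KC1 i j (by omega) (by omega)]

theorem KL_KC2 (h0 : TT 0 k) (h1 : TT 0 (k + 1)) (hl : TL 0 k) (hp : ∀ k', k = k' + 1 → KL k')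
    (i j : ℕ) (hij : i ≤ j) (hj : j ≤ 2 * k) (v : M (k + 1)) :
    cap i (cup (j + 2) v) = cup j (cap i v) := by
  refine ext_θ (cap i ∘ₗ cup (j + 2)) (cup j ∘ₗ cap i) (fun x hx v => ?_) v
  simp only [LinearMap.comp_apply]
  rcases i with _ | i
  · rcases le_or_gt x j with h | h
    · rw [cup_lt x j h hx]
      rcases x with _ | x
      · rw [cap_zz, cap_zz, map_smul]
      · rw [cap_zs x (by omega), cap_zs x (by omega), map_smul, U_cup_far hl j x (by omega) hj]
    · obtain ⟨x, rfl⟩ : ∃ n, x = n + 1 := ⟨x - 1, by omega⟩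
      rw [cup_ge (x + 1) (j + 1) (by omega) (by omega), cap_zs (x + 2) (by omega),
        cap_zs x (by omega), map_smul, U_cup_near hl j x (by omega) (by omega)]
  obtain ⟨j, rfl⟩ : ∃ j', j = j' + 1 := ⟨j - 1, by omega⟩
  obtain ⟨k, rfl⟩ : ∃ k', k = k' + 1 := ⟨k - 1, by omega⟩
  have hp := hp k rfl
  rcases lt_or_ge x i with h | h
  · obtain ⟨n, rfl⟩ : ∃ n, i = n + 1 := ⟨i - 1, by omega⟩
    obtain ⟨m, rfl⟩ : ∃ n, j = n + 1 := ⟨j - 1, by omega⟩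
    rw [cup_lt x (m + 2) (by omega) hx, cap_lt x n (by omega) (by omega),
      cap_lt x n (by omega) (by omega), cup_lt x m (by omega) (by omega),
      hp.KC2 n m (by omega) (by omega)]
  rcases Nat.eq_or_lt_of_le h with rfl | h
  · rw [cup_lt i (j + 1) (by omega) hx, cap_eq i (by omega), cap_eq i (by omega),
      D_cup_far h0 h1 hl (j + 1) i (by omega) (by omega)]
  rcases Nat.eq_or_lt_of_le h with rfl | h
  · rw [Nat.succ_eq_add_one, cup_lt (i + 1) (j + 1) (by omega) hx, cap_eq1 i (by omega),
      cap_eq1 i (by omega), D_cup_far h0 h1 hl (j + 1) i (by omega) (by omega), map_smul]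
  obtain ⟨x, rfl⟩ : ∃ n, x = n + 2 := ⟨x - 2, by omega⟩
  rcases lt_or_ge x j with h' | h'
  · obtain ⟨m, rfl⟩ : ∃ n, j = n + 1 := ⟨j - 1, by omega⟩
    rw [cup_lt (x + 2) (m + 2) (by omega) hx, cap_gt x i (by omega) (by omega),
      cap_gt x i (by omega) (by omega), cup_lt x m (by omega) (by omega),
      hp.KC2 i m (by omega) (by omega)]
  · rw [cup_ge (x + 2) (j + 2) (by omega) hx, cap_gt (x + 2) i (by omega) (by omega),
      cap_gt x i (by omega) (by omega), cup_ge x j (by omega) (by omega),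
      hp.KC2 i j (by omega) (by omega)]

theorem KL_KK (h0 : TT 0 k) (h1 : TT 0 (k + 1)) (hl : TL 0 k) (hp : ∀ k', k = k' + 1 → KL k')
    (i j : ℕ) (hij : i ≤ j) (hj : j ≤ 2 * k) (v : M (k + 2)) :
    cap i (cap (j + 2) v) = cap j (cap i v) := by
  refine ext_θ (cap i ∘ₗ cap (j + 2)) (cap j ∘ₗ cap i) (fun x hx v => ?_) v
  simp only [LinearMap.comp_apply]
  rcases i with _ | i
  · rcases le_or_gt x j with h | h
    · rw [cap_lt x j h (by omega)]
      rcases x with _ | x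
      · rw [cap_zz, cap_zz, map_smul]
      · rw [cap_zs x (by omega), cap_zs x (by omega), map_smul, cap_U_far hl j x (by omega) hj]
    obtain ⟨x, rfl⟩ : ∃ n, x = n + 1 := ⟨x - 1, by omega⟩
    have h : j ≤ x := by omega
    rw [cap_zs x (by omega), map_smul]
    rcases Nat.eq_or_lt_of_le h with rfl | h
    · rw [cap_eq (j + 1) (by omega), cap0_D h1 hl j (by omega)]
    rcases Nat.eq_or_lt_of_le h with rfl | h
    · rw [Nat.succ_eq_add_one, cap_eq1 (j + 1) (by omega), map_smul, cap0_D h1 hl j (by omega),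
        U_succ, hl.cT j (by omega) (by omega), smul_comm]
    obtain ⟨x, rfl⟩ : ∃ n, x = n + 2 := ⟨x - 2, by omega⟩
    rw [cap_gt (x + 1) (j + 1) (by omega) (by omega), cap_zs x (by omega),
      cap_U_near hl j x (by omega) (by omega)]
  obtain ⟨j, rfl⟩ : ∃ j', j = j' + 1 := ⟨j - 1, by omega⟩
  obtain ⟨k, rfl⟩ : ∃ k', k = k' + 1 := ⟨k - 1, by omega⟩
  have hp := hp k rfl
  rcases lt_or_ge x i with h | h
  · obtain ⟨n, rfl⟩ : ∃ n, i = n + 1 := ⟨i - 1, by omega⟩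
    obtain ⟨m, rfl⟩ : ∃ n, j = n + 1 := ⟨j - 1, by omega⟩
    rw [cap_lt x (m + 2) (by omega) (by omega), cap_lt x n (by omega) (by omega),
      cap_lt x n (by omega) (by omega), cap_lt x m (by omega) (by omega),
      hp.KK n m (by omega) (by omega)]
  rcases Nat.eq_or_lt_of_le h with rfl | h
  · rw [cap_lt i (j + 1) (by omega) (by omega), cap_eq i (by omega), cap_eq i (by omega),
      cap_D_far h0 h1 hl (j + 1) i (by omega) (by omega)]
  rcases Nat.eq_or_lt_of_le h with rfl | h
  · rw [Nat.succ_eq_add_one, cap_lt (i + 1) (j + 1) (by omega) (by omega), cap_eq1 i (by omega),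
      cap_eq1 i (by omega), map_smul, cap_D_far h0 h1 hl (j + 1) i (by omega) (by omega)]
  obtain ⟨x, rfl⟩ : ∃ n, x = n + 2 := ⟨x - 2, by omega⟩
  have h : i ≤ x := by omega
  rw [cap_gt x i (by omega) (by omega)]
  rcases lt_or_ge x j with h' | h'
  · obtain ⟨m, rfl⟩ : ∃ n, j = n + 1 := ⟨j - 1, by omega⟩
    rw [cap_lt (x + 2) (m + 2) (by omega) (by omega), cap_gt x i (by omega) (by omega),
      cap_lt x m (by omega) (by omega), hp.KK i m (by omega) (by omega)]
  rcases Nat.eq_or_lt_of_le h' with rfl | h'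
  · rw [cap_eq (j + 2) (by omega), cap_eq j (by omega),
      cap_D_near h0 h1 hl i j (by omega) (by omega) (by omega) (by omega)]
  rcases Nat.eq_or_lt_of_le h' with rfl | h'
  · rw [Nat.succ_eq_add_one, cap_eq1 (j + 2) (by omega), map_smul, cap_eq1 j (by omega),
      cap_D_near h0 h1 hl i j (by omega) (by omega) (by omega) (by omega)]
  obtain ⟨x, rfl⟩ : ∃ n, x = n + 2 := ⟨x - 2, by omega⟩
  rw [cap_gt (x + 2) (j + 2) (by omega) (by omega), cap_gt x j (by omega) (by omega),
    cap_gt x i (by omega) (by omega), hp.KK i j (by omega) (by omega)]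

theorem KL_step (h0 : TT 0 k) (h1 : TT 0 (k + 1)) (hl : TL 0 k) (hp : ∀ k', k = k' + 1 → KL k') :
    KL k :=
  ⟨KL_CC hp, KL_KK h0 h1 hl hp, KL_KC1 h0 h1 hl hp, KL_KC2 h0 h1 hl hp⟩

/-! ### Induction step, generators of positive index -/

structure HY (k : ℕ) : Prop where
  h0 : TT 0 k
  h1 : TT 0 (k + 1)
  hl : TL 0 k
  hk : KL k

theorem cs (x j : ℕ) : (∃ m, j = m + 1 ∧ x ≤ m) ∨ x = j ∨ x = j + 1 ∨ ∃ y, x = y + 2 ∧ j ≤ y := by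
  rcases lt_or_ge x j with h | h
  · exact Or.inl ⟨j - 1, by omega, by omega⟩
  rcases Nat.eq_or_lt_of_le h with h | h
  · exact Or.inr (Or.inl h.symm)
  rcases Nat.eq_or_lt_of_le h with h | h
  · exact Or.inr (Or.inr (Or.inl h.symm))
  · exact Or.inr (Or.inr (Or.inr ⟨x - 2, by omega, by omega⟩))

theorem cs3 (x j : ℕ) : (∃ m, j = m + 1 ∧ x ≤ m) ∨ x = j ∨ ∃ y, x = y + 1 ∧ j ≤ y := by
  rcases lt_or_ge x j with h | h
  · exact Or.inl ⟨j - 1, by omega, by omega⟩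
  rcases Nat.eq_or_lt_of_le h with h | h
  · exact Or.inr (Or.inl h.symm)
  · exact Or.inr (Or.inr ⟨x - 1, by omega, by omega⟩)

theorem cs2 (x j : ℕ) : (∃ m, j = m + 1 ∧ x ≤ m) ∨ j ≤ x := by
  rcases lt_or_ge x j with h | h
  · exact Or.inl ⟨j - 1, by omega, by omega⟩
  · exact Or.inr h

theorem ss : s * s = 1 + z * s - z * s * d := by
  linear_combination s * zd + rs

theorem Tsq0 (i : ℕ) (hTS : ∀ v : M (k + 1), T i (S i v) = v)
    (hTc : ∀ v : M k, T i (cup i v) = s • cup i v) (v : M (k + 1)) :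
    T i (T i v) = v + z • T i v - (z * s) • (cup i ∘ₗ cap i) v := by
  have h := hTS v
  rw [S_def, map_sub, map_smul, map_sub, hTc] at h
  rw [LinearMap.comp_apply]
  linear_combination (norm := module) h

theorem ST_of_TS (i : ℕ) (hTS : ∀ v : M (k + 1), T i (S i v) = v)
    (hTc : ∀ v : M k, T i (cup i v) = s • cup i v)
    (hcT : ∀ v : M (k + 1), cap i (T i v) = s • cap i v) (v : M (k + 1)) : S i (T i v) = v := by
  conv_rhs => rw [← hTS v]
  rw [S_def, S_def, hcT, map_smul (cup i), map_sub, map_smul, map_sub, hTc]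

theorem cl_comm {N : Type} [AddCommGroup N] [Module ℂ N] (A B E : N →ₗ[ℂ] N)
    (hA : ∀ w, A (A w) = w + z • A w - (z * s) • E w) (hE : ∀ w, E (B w) = B (E w)) (u : N)
    (hu : A (B u) = B (A u)) : A (B (A u)) = B (A (A u)) := by
  rw [← hu, hA, hA, map_sub, map_add, map_smul, map_smul, hE, hu]

theorem cl_br {N : Type} [AddCommGroup N] [Module ℂ N] (A B EA EB : N →ₗ[ℂ] N)
    (hA : ∀ w, A (A w) = w + z • A w - (z * s) • EA w)
    (hB : ∀ w, B (B w) = w + z • B w - (z * s) • EB w)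
    (hE : ∀ w, A (B (EA w)) = EB (A (B w))) (u : N)
    (hu : A (B (A u)) = B (A (B u))) : A (B (A (A u))) = B (A (B (A u))) := by
  rw [hu, hB, hA]
  simp only [map_sub, map_add, map_smul]
  rw [hE, hu]

theorem S_eq1 (j : ℕ) (hx : j + 1 ≤ 2 * k + 2) (v : M (k + 1)) :
    S (j + 1) (θ (j + 1) v) = θ j v := by
  rw [S_def, T_eq1 j (by omega), cap_eq1 j hx, map_smul]
  module

theorem S_eq (j : ℕ) (hx : j ≤ 2 * k + 2) (v : M (k + 1)) :
    S (j + 1) (θ j v) = θ (j + 1) v - z • θ j v + z • cup (j + 1) (D 0 j v) := by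
  rw [S_def, T_eq j (by omega), cap_eq j hx]
  module

theorem S_lt (x j : ℕ) (h : x ≤ j) (hx : x ≤ 2 * k + 2) (v : M (k + 1)) (hx' : x ≤ 2 * k) :
    S (j + 2) (θ x v) = θ x (S j v) := by
  rw [S_def, S_def, T_lt x j h (by omega), cap_lt x j h hx, cup_lt x j h (by omega)]
  simp only [map_sub, map_smul]

theorem S_gt (x j : ℕ) (h : j ≤ x) (hx : x + 2 ≤ 2 * k + 2) (v : M (k + 1)) :
    S (j + 1) (θ (x + 2) v) = θ (x + 2) (S j v) := by
  rw [S_def, S_def, T_gt (x + 2) j (by omega) (by omega), cap_gt x j h hx,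
    cup_ge x j h (by omega)]
  simp only [map_sub, map_smul]

namespace HY


theorem a0 (H : HY k) (i : ℕ) (hi : i + 1 ≤ 2 * (k + 1)) (v : M (k + 1)) :
    cap (i + 1) (cup (i + 1) v) = d • v := by
  refine ext_θ (cap (i + 1) ∘ₗ cup (i + 1)) (d • LinearMap.id) (fun x hx v => ?_) v
  change cap (i + 1) (cup (i + 1) (θ x v)) = d • θ x v
  rcases cs2 x i with ⟨m, rfl, h⟩ | h
  · rw [cup_lt x m h hx, cap_lt x m h (by omega), H.hl.a0 m (by omega) (by omega), map_smul]
  · rw [cup_ge x i h hx, cap_gt x i h (by omega), H.hl.a0 i (by omega) (by omega), map_smul]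

theorem a1 (H : HY k) (i : ℕ) (hi : i + 2 ≤ 2 * (k + 1)) (v : M (k + 1)) :
    cap (i + 1) (cup (i + 2) v) = v := by
  refine ext_θ (cap (i + 1) ∘ₗ cup (i + 2)) (LinearMap.id) (fun x hx v => ?_) v
  change cap (i + 1) (cup (i + 2) (θ x v)) = θ x v
  rcases cs3 x i with ⟨m, rfl, h⟩ | rfl | ⟨y, rfl, h⟩
  · rw [cup_lt x (m + 1) (by omega) hx, cap_lt x m h (by omega),
      H.hl.a1 m (by omega) (by omega)]
  · rw [cup_lt x x le_rfl hx, cap_eq x (by omega), D_cup_eq H.h1 H.hl x (by omega)]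
  · rw [cup_ge (y + 1) (i + 1) (by omega) hx, cap_gt (y + 1) i (by omega) (by omega),
      H.hl.a1 i (by omega) (by omega)]

theorem a2 (H : HY k) (i : ℕ) (hi : i + 2 ≤ 2 * (k + 1)) (v : M (k + 1)) :
    cap (i + 2) (cup (i + 1) v) = v := by
  refine ext_θ (cap (i + 2) ∘ₗ cup (i + 1)) (LinearMap.id) (fun x hx v => ?_) v
  change cap (i + 2) (cup (i + 1) (θ x v)) = θ x v
  rcases cs3 x i with ⟨m, rfl, h⟩ | rfl | ⟨y, rfl, h⟩
  · rw [cup_lt x m (by omega) hx, cap_lt x (m + 1) (by omega) (by omega),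
      H.hl.a2 m (by omega) (by omega)]
  · rw [cup_ge x x le_rfl hx, cap_eq1 (x + 1) (by omega), D_succ0,
      Sc H.h1 H.hl x (by omega) (by omega), map_smul, sr_smul, D_cup_eq H.h1 H.hl x (by omega)]
  · rw [cup_ge (y + 1) i (by omega) hx, cap_gt (y + 1) (i + 1) (by omega) (by omega),
      H.hl.a2 i (by omega) (by omega)]

theorem Tc (H : HY k) (i : ℕ) (hi : i + 1 ≤ 2 * (k + 1)) (v : M (k + 1)) :
    T (i + 1) (cup (i + 1) v) = s • cup (i + 1) v := by
  refine ext_θ (T (i + 1) ∘ₗ cup (i + 1)) (s • cup (i + 1)) (fun x hx v => ?_) v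
  change T (i + 1) (cup (i + 1) (θ x v)) = s • cup (i + 1) (θ x v)
  rcases cs2 x i with ⟨m, rfl, h⟩ | h
  · rw [cup_lt x m h hx, T_lt x m h (by omega), H.hl.Tc m (by omega) (by omega), map_smul]
  · rw [cup_ge x i h hx, T_gt (x + 2) i (by omega) (by omega), H.hl.Tc i (by omega) (by omega),
      map_smul]

theorem cT (H : HY k) (i : ℕ) (hi : i + 1 ≤ 2 * (k + 1)) (v : M (k + 2)) :
    cap (i + 1) (T (i + 1) v) = s • cap (i + 1) v := by
  refine ext_θ (cap (i + 1) ∘ₗ T (i + 1)) (s • cap (i + 1)) (fun x hx v => ?_) v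
  change cap (i + 1) (T (i + 1) (θ x v)) = s • cap (i + 1) (θ x v)
  rcases cs x i with ⟨m, rfl, h⟩ | rfl | rfl | ⟨y, rfl, h⟩
  · rw [T_lt x m h hx, cap_lt x m h (by omega), cap_lt x m h (by omega),
      H.hl.cT m (by omega) (by omega), map_smul]
  · rw [T_eq x hx, cap_eq1 x (by omega), cap_eq x (by omega)]
  · rw [T_eq1 i hx, map_sub, map_add, map_smul, map_smul, cap_eq1 i (by omega),
      cap_eq i (by omega), H.a0 i hi, smul_smul s s, ss]
    module
  · rw [T_gt (y + 2) i (by omega) hx, cap_gt y i h (by omega), cap_gt y i h (by omega),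
      H.hl.cT i (by omega) (by omega), map_smul]

theorem TS (H : HY k) (i : ℕ) (hi : i + 1 ≤ 2 * (k + 1)) (v : M (k + 2)) : T (i + 1) (S (i + 1) v) = v := by
  refine ext_θ (T (i + 1) ∘ₗ S (i + 1)) LinearMap.id (fun x hx v => ?_) v
  change T (i + 1) (S (i + 1) (θ x v)) = θ x v
  rcases cs x i with ⟨m, rfl, h⟩ | rfl | rfl | ⟨y, rfl, h⟩
  · rw [S_lt x m h hx _ (by omega), T_lt x m h (by omega), H.h1.TS m (by omega) (by omega)]
  · rw [S_eq x (by omega), map_add, map_sub, map_smul, map_smul, T_eq x (by omega),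
      T_eq1 x (by omega), H.Tc x hi]
    module
  · rw [S_eq1 i (by omega), T_eq i (by omega)]
  · rw [S_gt y i h (by omega), T_gt (y + 2) i (by omega) hx, H.h1.TS i (by omega) (by omega)]

theorem ST (H : HY k) (i : ℕ) (hi : i + 1 ≤ 2 * (k + 1)) (v : M (k + 2)) : S (i + 1) (T (i + 1) v) = v :=
  ST_of_TS (i + 1) (H.TS i hi) (H.Tc i hi) (H.cT i hi) v

theorem TC1 (H : HY k) (i j : ℕ) (hij : i + 2 ≤ j) (hj : j + 1 ≤ 2 * (k + 1)) (v : M (k + 1)) :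
    T (i + 1) (cup (j + 1) v) = cup (j + 1) (T (i + 1) v) := by
  refine ext_θ (T (i + 1) ∘ₗ cup (j + 1)) (cup (j + 1) ∘ₗ T (i + 1)) (fun x hx v => ?_) v
  simp only [LinearMap.comp_apply]
  obtain ⟨n, rfl⟩ : ∃ n, j = n + 1 := ⟨j - 1, by omega⟩
  rcases cs x i with ⟨m, rfl, h⟩ | rfl | rfl | ⟨y, rfl, h⟩
  · rw [cup_lt x n (by omega) hx, T_lt x m h (by omega), T_lt x m h (by omega),
      cup_lt x n (by omega) hx, H.hl.TC1 m n (by omega) (by omega) (by omega)]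
  · rw [cup_lt x n (by omega) hx, T_eq x (by omega), T_eq x (by omega),
      cup_lt (x + 1) n (by omega) (by omega)]
  · rw [cup_lt (i + 1) n (by omega) hx, T_eq1 i (by omega), T_eq1 i (by omega), map_sub, map_add,
      map_smul, map_smul, cup_lt (i + 1) n (by omega) hx, cup_lt i n (by omega) (by omega),
      H.hk.CC (i + 1) n (by omega) (by omega),
      D_cup_far H.h0 H.h1 H.hl n i (by omega) (by omega)]
  · rw [T_gt (y + 2) i (by omega) (by omega)]
    rcases le_or_gt (y + 2) n with h' | h'
    · rw [cup_lt (y + 2) n (by omega) hx, T_gt (y + 2) i (by omega) (by omega),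
        cup_lt (y + 2) n (by omega) hx, H.hl.TC1 i n (by omega) (by omega) (by omega)]
    · rw [cup_ge (y + 2) (n + 1) (by omega) hx, T_gt (y + 2 + 2) i (by omega) (by omega),
        cup_ge (y + 2) (n + 1) (by omega) hx, H.hl.TC1 i (n + 1) (by omega) (by omega) (by omega)]

theorem TC2 (H : HY k) (i j : ℕ) (hij : j ≤ i) (hj : i + 2 < 2 * (k + 1)) (v : M (k + 1)) :
    T (i + 3) (cup (j + 1) v) = cup (j + 1) (T (i + 1) v) := by
  refine ext_θ (T (i + 3) ∘ₗ cup (j + 1)) (cup (j + 1) ∘ₗ T (i + 1)) (fun x hx v => ?_) v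
  simp only [LinearMap.comp_apply]
  rcases cs x i with ⟨m, rfl, h⟩ | rfl | rfl | ⟨y, rfl, h⟩
  · rw [T_lt x m h (by omega)]
    rcases cs2 x j with ⟨n, rfl, h'⟩ | h'
    · rw [cup_lt x n h' hx, cup_lt x n h' hx, T_lt x (m + 2) (by omega) (by omega),
        H.hl.TC2 m n (by omega) (by omega) (by omega)]
    · rw [cup_ge x j h' hx, cup_ge x j h' hx, T_lt (x + 2) (m + 2) (by omega) (by omega),
        H.hl.TC2 m j (by omega) (by omega) (by omega)]
  · rw [cup_ge x j hij hx, T_eq (x + 2) (by omega), T_eq x (by omega),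
      cup_ge (x + 1) j (by omega) (by omega)]
  · rw [cup_ge (i + 1) j (by omega) hx, T_eq1 (i + 2) (by omega), T_eq1 i (by omega), map_sub,
      map_add, map_smul, map_smul, cup_ge (i + 1) j (by omega) hx, cup_ge i j (by omega) (by omega),
      ← H.hk.CC (j + 1) (i + 1) (by omega) (by omega),
      D_cup_near H.h0 H.h1 H.hl j i (by omega) (by omega) (by omega) (by omega)]
  · rw [cup_ge (y + 2) j (by omega) hx, T_gt (y + 2 + 2) (i + 2) (by omega) (by omega),
      T_gt (y + 2) i (by omega) (by omega), cup_ge (y + 2) j (by omega) hx,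
      H.hl.TC2 i j (by omega) (by omega) (by omega)]

theorem TK1 (H : HY k) (i j : ℕ) (hij : i + 2 ≤ j) (hj : j + 1 ≤ 2 * (k + 1)) (v : M (k + 2)) :
    cap (j + 1) (T (i + 1) v) = T (i + 1) (cap (j + 1) v) := by
  refine ext_θ (cap (j + 1) ∘ₗ T (i + 1)) (T (i + 1) ∘ₗ cap (j + 1)) (fun x hx v => ?_) v
  simp only [LinearMap.comp_apply]
  rcases cs x i with ⟨m, rfl, h⟩ | rfl | rfl | ⟨y, rfl, h⟩
  · obtain ⟨n, rfl⟩ : ∃ n, j = n + 1 := ⟨j - 1, by omega⟩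
    rw [cap_lt x n (by omega) (by omega), T_lt x m h (by omega), T_lt x m h (by omega),
      cap_lt x n (by omega) (by omega), H.hl.TK1 m n (by omega) (by omega) (by omega)]
  · obtain ⟨n, rfl⟩ : ∃ n, j = n + 1 := ⟨j - 1, by omega⟩
    rw [cap_lt x n (by omega) (by omega), T_eq x (by omega), T_eq x (by omega),
      cap_lt (x + 1) n (by omega) (by omega)]
  · obtain ⟨n, rfl⟩ : ∃ n, j = n + 1 := ⟨j - 1, by omega⟩
    rw [cap_lt (i + 1) n (by omega) (by omega), T_eq1 i (by omega), T_eq1 i (by omega), map_sub,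
      map_add, map_smul, map_smul, cap_lt (i + 1) n (by omega) (by omega),
      cap_lt i n (by omega) (by omega), H.hk.KC1 (i + 1) n (by omega) (by omega),
      cap_D_far H.h0 H.h1 H.hl n i (by omega) (by omega)]
  · rw [T_gt (y + 2) i (by omega) (by omega)]
    rcases cs (y + 2) j with ⟨n, rfl, h'⟩ | h' | h' | ⟨w, h', h''⟩
    · rw [cap_lt (y + 2) n (by omega) (by omega), cap_lt (y + 2) n (by omega) (by omega),
        T_gt (y + 2) i (by omega) (by omega), H.hl.TK1 i n (by omega) (by omega) (by omega)]
    · rw [h', cap_eq j (by omega), cap_eq j (by omega),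
        D_T_near H.h1 i j (by omega) (by omega) (by omega)]
    · rw [h', cap_eq1 j (by omega), cap_eq1 j (by omega),
        D_T_near H.h1 i j (by omega) (by omega) (by omega), map_smul]
    · rw [cap_gt y j (by omega) (by omega), cap_gt y j (by omega) (by omega),
        T_gt y i (by omega) (by omega), H.hl.TK1 i j (by omega) (by omega) (by omega)]

theorem TK2 (H : HY k) (i j : ℕ) (hij : j ≤ i) (hj : i + 2 < 2 * (k + 1)) (v : M (k + 2)) :
    cap (j + 1) (T (i + 3) v) = T (i + 1) (cap (j + 1) v) := by
  refine ext_θ (cap (j + 1) ∘ₗ T (i + 3)) (T (i + 1) ∘ₗ cap (j + 1)) (fun x hx v => ?_) v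
  simp only [LinearMap.comp_apply]
  rcases cs x j with ⟨m, rfl, h⟩ | rfl | rfl | ⟨y, rfl, h⟩
  · obtain ⟨n, rfl⟩ : ∃ n, i = n + 1 := ⟨i - 1, by omega⟩
    rw [T_lt x (n + 2) (by omega) (by omega), cap_lt x m h (by omega), cap_lt x m h (by omega),
      T_lt x n (by omega) (by omega), H.hl.TK2 n m (by omega) (by omega) (by omega)]
  · rw [T_lt x (i + 1) (by omega) (by omega), cap_eq x (by omega), cap_eq x (by omega),
      D_T_far H.h1 (i + 1) x (by omega) (by omega)]
  · rw [T_lt (j + 1) (i + 1) (by omega) (by omega), cap_eq1 j (by omega), cap_eq1 j (by omega),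
      D_T_far H.h1 (i + 1) j (by omega) (by omega), map_smul]
  · rw [cap_gt y j (by omega) (by omega)]
    rcases cs y i with ⟨m, rfl, h'⟩ | rfl | rfl | ⟨w, rfl, h'⟩
    · rw [T_lt (y + 2) (m + 2) (by omega) (by omega), cap_gt y j (by omega) (by omega),
        T_lt y m (by omega) (by omega), H.hl.TK2 m j (by omega) (by omega) (by omega)]
    · rw [T_eq (y + 2) (by omega), T_eq y (by omega), cap_gt (y + 1) j (by omega) (by omega)]
    · rw [T_eq1 (i + 2) (by omega), T_eq1 i (by omega), map_sub,
        map_add, map_smul, map_smul, cap_gt i j (by omega) (by omega),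
        cap_gt (i + 1) j (by omega) (by omega), H.hk.KC2 (j + 1) (i + 1) (by omega) (by omega),
        cap_D_near H.h0 H.h1 H.hl j i (by omega) (by omega) (by omega) (by omega)]
    · rw [T_gt (w + 2 + 2) (i + 2) (by omega) (by omega), cap_gt (w + 2) j (by omega) (by omega),
        T_gt (w + 2) i (by omega) (by omega), H.hl.TK2 i j (by omega) (by omega) (by omega)]

theorem s1 (H : HY k) (i : ℕ) (hi : i + 2 ≤ 2 * (k + 1)) (v : M (k + 1)) :
    T (i + 1) (T (i + 2) (cup (i + 1) v)) = cup (i + 2) v := by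
  refine ext_θ (T (i + 1) ∘ₗ T (i + 2) ∘ₗ cup (i + 1)) (cup (i + 2)) (fun x hx v => ?_) v
  simp only [LinearMap.comp_apply]
  rcases cs3 x i with ⟨m, rfl, h⟩ | rfl | ⟨y, rfl, h⟩
  · rw [cup_lt x m h hx, T_lt x (m + 1) (by omega) (by omega), T_lt x m h (by omega),
      cup_lt x (m + 1) (by omega) hx, H.hl.s1 m (by omega) (by omega)]
  · rw [cup_ge x x le_rfl hx, T_eq1 (x + 1) (by omega), D_succ0,
      Sc H.h1 H.hl x (by omega) (by omega), map_smul, D_cup_eq H.h1 H.hl x (by omega), map_smul,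
      cup_lt x x le_rfl hx]
    simp only [map_sub, map_add, map_smul]
    rw [T_eq1 x (by omega), T_gt (x + 1 + 1) x (by omega) (by omega), T_eq x (by omega),
      H.hl.Tc x (by omega) (by omega), D_cup_eq H.h1 H.hl x (by omega), cup_ge x x le_rfl hx,
      map_smul, smul_smul (z * s) r, show (z * s) * r = z by linear_combination z * rs]
    module
  · rw [cup_ge (y + 1) i (by omega) hx, T_gt (y + 1 + 2) (i + 1) (by omega) (by omega),
      T_gt (y + 1 + 2) i (by omega) (by omega), H.hl.s1 i (by omega) (by omega),
      cup_ge (y + 1) (i + 1) (by omega) hx]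

theorem s2 (H : HY k) (i : ℕ) (hi : i + 2 ≤ 2 * (k + 1)) (v : M (k + 1)) :
    T (i + 2) (T (i + 1) (cup (i + 2) v)) = cup (i + 1) v := by
  refine ext_θ (T (i + 2) ∘ₗ T (i + 1) ∘ₗ cup (i + 2)) (cup (i + 1)) (fun x hx v => ?_) v
  simp only [LinearMap.comp_apply]
  rcases cs3 x i with ⟨m, rfl, h⟩ | rfl | ⟨y, rfl, h⟩
  · rw [cup_lt x (m + 1) (by omega) hx, T_lt x m h (by omega), T_lt x (m + 1) (by omega) (by omega),
      cup_lt x m (by omega) hx, H.hl.s2 m (by omega) (by omega)]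
  · rw [cup_lt x x le_rfl hx, T_eq x (by omega), T_eq (x + 1) (by omega), cup_ge x x le_rfl hx]
  · rw [cup_ge (y + 1) (i + 1) (by omega) hx, T_gt (y + 1 + 2) i (by omega) (by omega),
      T_gt (y + 1 + 2) (i + 1) (by omega) (by omega), H.hl.s2 i (by omega) (by omega),
      cup_ge (y + 1) i (by omega) hx]

theorem kTc1 (H : HY k) (i : ℕ) (hi : i + 2 ≤ 2 * (k + 1)) (v : M (k + 1)) :
    cap (i + 2) (T (i + 1) (cup (i + 2) v)) = r • v := by
  have h := H.cT (i + 1) (by omega) (T (i + 1) (cup (i + 2) v))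
  rw [H.s2 i hi, H.a2 i hi] at h
  conv_rhs => rw [h]
  exact (rs_smul _).symm

theorem kTc2 (H : HY k) (i : ℕ) (hi : i + 2 ≤ 2 * (k + 1)) (v : M (k + 1)) :
    cap (i + 1) (T (i + 2) (cup (i + 1) v)) = r • v := by
  have h := H.cT i (by omega) (T (i + 2) (cup (i + 1) v))
  rw [H.s1 i hi, H.a1 i hi] at h
  conv_rhs => rw [h]
  exact (rs_smul _).symm

theorem s3 (H : HY k) (i : ℕ) (hi : i + 2 ≤ 2 * (k + 1)) (v : M (k + 2)) :
    cap (i + 2) (T (i + 1) (T (i + 2) v)) = cap (i + 1) v := by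
  refine ext_θ (cap (i + 2) ∘ₗ T (i + 1) ∘ₗ T (i + 2)) (cap (i + 1)) (fun x hx v => ?_) v
  simp only [LinearMap.comp_apply]
  rcases cs x i with ⟨m, rfl, h⟩ | rfl | rfl | ⟨y, rfl, h⟩
  · rw [T_lt x (m + 1) (by omega) (by omega), T_lt x m h (by omega),
      cap_lt x (m + 1) (by omega) (by omega), H.hl.s3 m (by omega) (by omega),
      cap_lt x m (by omega) (by omega)]
  · rw [T_lt x x le_rfl (by omega), T_eq x (by omega), cap_eq (x + 1) (by omega), D_succ0,
      H.h1.ST x (by omega) (by omega), cap_eq x (by omega)]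
  · rw [T_eq (i + 1) (by omega), T_gt (i + 1 + 1) i (by omega) (by omega),
      cap_eq1 (i + 1) (by omega), D_succ0, H.h1.ST i (by omega) (by omega), cap_eq1 i (by omega)]
  rcases Nat.eq_or_lt_of_le h with rfl | h
  · rw [T_eq1 (i + 1) (by omega)]
    simp only [map_sub, map_add, map_smul]
    rw [T_eq1 i (by omega), T_gt (i + 1 + 1) i (by omega) (by omega)]
    simp only [map_sub, map_add, map_smul]
    rw [H.kTc1 i hi, H.a2 i hi, cap_eq1 (i + 1) (by omega), cap_eq (i + 1) (by omega),
      cap_lt i i le_rfl (by omega), cap_gt i i le_rfl (by omega), D_succ0 i (T i v),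
      H.h1.ST i (by omega) (by omega), smul_smul (z * s) r,
      show (z * s) * r = z by linear_combination z * rs]
    module
  · obtain ⟨w, rfl⟩ : ∃ w, y = w + 1 := ⟨y - 1, by omega⟩
    rw [T_gt (w + 1 + 2) (i + 1) (by omega) (by omega), T_gt (w + 1 + 2) i (by omega) (by omega),
      cap_gt (w + 1) (i + 1) (by omega) (by omega), H.hl.s3 i (by omega) (by omega),
      cap_gt (w + 1) i (by omega) (by omega)]

theorem s4 (H : HY k) (i : ℕ) (hi : i + 2 ≤ 2 * (k + 1)) (v : M (k + 2)) :
    cap (i + 1) (T (i + 2) (T (i + 1) v)) = cap (i + 2) v := by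
  refine ext_θ (cap (i + 1) ∘ₗ T (i + 2) ∘ₗ T (i + 1)) (cap (i + 2)) (fun x hx v => ?_) v
  simp only [LinearMap.comp_apply]
  rcases cs x i with ⟨m, rfl, h⟩ | rfl | rfl | ⟨y, rfl, h⟩
  · rw [T_lt x m h (by omega), T_lt x (m + 1) (by omega) (by omega),
      cap_lt x m (by omega) (by omega), H.hl.s4 m (by omega) (by omega),
      cap_lt x (m + 1) (by omega) (by omega)]
  · rw [T_eq x (by omega), T_eq (x + 1) (by omega), cap_gt x x le_rfl (by omega),
      cap_lt x x le_rfl (by omega)]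
  · rw [T_eq1 i (by omega)]
    simp only [map_sub, map_add, map_smul]
    rw [T_lt i i le_rfl (by omega), T_eq (i + 1) (by omega), H.kTc2 i hi, cap_eq i (by omega),
      cap_gt i i le_rfl (by omega), cap_eq (i + 1) (by omega), D_succ0, S_def]
    simp only [map_sub, map_add, map_smul]
    rw [D_cup_eq H.h1 H.hl i (by omega), smul_smul (z * s) r,
      show (z * s) * r = z by linear_combination z * rs]
    module
  rcases Nat.eq_or_lt_of_le h with rfl | h
  · rw [T_gt (i + 2) i (by omega) (by omega), T_eq1 (i + 1) (by omega), D_succ0,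
      H.h1.ST i (by omega) (by omega)]
    simp only [map_sub, map_add, map_smul]
    rw [H.a1 i hi, cap_eq1 i (by omega), cap_gt i i le_rfl (by omega),
      H.hl.cT i (by omega) (by omega), cap_eq1 (i + 1) (by omega), D_succ0, S_def]
    simp only [map_sub, map_add, map_smul]
    rw [D_cup_eq H.h1 H.hl i (by omega)]
    module
  · obtain ⟨w, rfl⟩ : ∃ w, y = w + 1 := ⟨y - 1, by omega⟩
    rw [T_gt (w + 1 + 2) i (by omega) (by omega), T_gt (w + 1 + 2) (i + 1) (by omega) (by omega),
      cap_gt (w + 1) i (by omega) (by omega), H.hl.s4 i (by omega) (by omega),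
      cap_gt (w + 1) (i + 1) (by omega) (by omega)]

theorem sq (H : HY k) (i : ℕ) (hi : i + 1 ≤ 2 * (k + 1)) (v : M (k + 2)) :
    T (i + 1) (T (i + 1) v) =
      v + z • T (i + 1) v - (z * s) • (cup (i + 1) ∘ₗ cap (i + 1)) v :=
  Tsq0 (i + 1) (H.TS i hi) (H.Tc i hi) v

theorem br (H : HY k) (i : ℕ) (hi : i + 2 ≤ 2 * (k + 1)) (v : M (k + 2)) :
    T (i + 1) (T (i + 2) (T (i + 1) v)) = T (i + 2) (T (i + 1) (T (i + 2) v)) := by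
  refine ext_θ (T (i + 1) ∘ₗ T (i + 2) ∘ₗ T (i + 1)) (T (i + 2) ∘ₗ T (i + 1) ∘ₗ T (i + 2))
    (fun x hx v => ?_) v
  simp only [LinearMap.comp_apply]
  have e0 : ∀ v : M (k + 1), T (i + 1) (T (i + 2) (T (i + 1) (θ i v)))
      = T (i + 2) (T (i + 1) (T (i + 2) (θ i v))) := fun v => by
    rw [T_eq i (by omega), T_eq (i + 1) (by omega), T_gt (i + 1 + 1) i (by omega) (by omega),
      T_lt i i le_rfl (by omega), T_eq i (by omega), T_eq (i + 1) (by omega)]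
  have e1 : ∀ v : M (k + 1), T (i + 1) (T (i + 2) (T (i + 1) (θ (i + 1) v)))
      = T (i + 2) (T (i + 1) (T (i + 2) (θ (i + 1) v))) := fun v => by
    rw [← T_eq i (by omega) v]
    refine cl_br (T (i + 1)) (T (i + 2)) _ _ (H.sq i (by omega)) (H.sq (i + 1) hi)
      (fun w => ?_) _ (e0 v)
    rw [LinearMap.comp_apply, LinearMap.comp_apply, H.s1 i hi, H.s3 i hi]
  rcases cs x i with ⟨m, rfl, h⟩ | rfl | rfl | ⟨y, rfl, h⟩
  · rw [T_lt x m h (by omega), T_lt x (m + 1) (by omega) (by omega), T_lt x m h (by omega),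
      T_lt x (m + 1) (by omega) (by omega), T_lt x m h (by omega),
      T_lt x (m + 1) (by omega) (by omega), H.h1.br m (by omega) (by omega)]
  · exact e0 v
  · exact e1 v
  rcases Nat.eq_or_lt_of_le h with rfl | h
  · rw [← T_eq (i + 1) (by omega) v]
    refine (cl_br (T (i + 2)) (T (i + 1)) _ _ (H.sq (i + 1) (by omega)) (H.sq i (by omega))
      (fun w => ?_) _ (e1 v).symm).symm
    rw [LinearMap.comp_apply, LinearMap.comp_apply, H.s2 i hi, H.s4 i hi]
  · rw [T_gt (y + 2) i (by omega) (by omega), T_gt (y + 2) (i + 1) (by omega) (by omega),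
      T_gt (y + 2) i (by omega) (by omega), T_gt (y + 2) (i + 1) (by omega) (by omega),
      T_gt (y + 2) i (by omega) (by omega), T_gt (y + 2) (i + 1) (by omega) (by omega),
      H.h1.br i (by omega) (by omega)]

theorem comm (H : HY k) (i j : ℕ) (hij : i + 2 ≤ j) (hj : j + 1 ≤ 2 * (k + 1)) (v : M (k + 2)) :
    T (i + 1) (T (j + 1) v) = T (j + 1) (T (i + 1) v) := by
  refine ext_θ (T (i + 1) ∘ₗ T (j + 1)) (T (j + 1) ∘ₗ T (i + 1)) (fun x hx v => ?_) v
  simp only [LinearMap.comp_apply]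
  have e0 : ∀ v : M (k + 1), T (i + 1) (T (j + 1) (θ i v)) = T (j + 1) (T (i + 1) (θ i v)) := by
    intro v
    obtain ⟨n, rfl⟩ : ∃ n, j = n + 1 := ⟨j - 1, by omega⟩
    rw [T_lt i n (by omega) (by omega), T_eq i (by omega), T_eq i (by omega),
      T_lt (i + 1) n (by omega) (by omega)]
  have e1 : ∀ v : M (k + 1), T (i + 1) (T (j + 1) (θ j v)) = T (j + 1) (T (i + 1) (θ j v)) := by
    intro v
    rw [T_eq j (by omega), T_gt (j + 1) i (by omega) (by omega),
      T_gt j i (by omega) (by omega), T_eq j (by omega)]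
  rcases cs x i with ⟨m, rfl, h⟩ | rfl | rfl | ⟨y, rfl, h⟩
  · obtain ⟨n, rfl⟩ : ∃ n, j = n + 1 := ⟨j - 1, by omega⟩
    rw [T_lt x n (by omega) (by omega), T_lt x m (by omega) (by omega),
      T_lt x m (by omega) (by omega), T_lt x n (by omega) (by omega),
      H.h1.comm m n (by omega) (by omega) (by omega)]
  · exact e0 v
  · rw [← T_eq i (by omega) v]
    refine cl_comm (T (i + 1)) (T (j + 1)) _ (H.sq i (by omega)) (fun w => ?_) _ (e0 v)
    obtain ⟨n, rfl⟩ : ∃ n, j = n + 2 := ⟨j - 2, by omega⟩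
    rw [LinearMap.comp_apply, LinearMap.comp_apply, H.TK2 n i (by omega) (by omega),
      H.TC2 n i (by omega) (by omega)]
  · rcases cs (y + 2) j with ⟨n, rfl, h'⟩ | h' | h' | ⟨w, h', h''⟩
    · rw [T_gt (y + 2) i (by omega) (by omega), T_lt (y + 2) n (by omega) (by omega),
        T_lt (y + 2) n (by omega) (by omega), T_gt (y + 2) i (by omega) (by omega),
        H.h1.comm i n (by omega) (by omega) (by omega)]
    · rw [h']
      exact e1 v
    · rw [h', ← T_eq j (by omega) v]
      refine (cl_comm (T (j + 1)) (T (i + 1)) _ (H.sq j (by omega)) (fun w => ?_) _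
        (e1 v).symm).symm
      rw [LinearMap.comp_apply, LinearMap.comp_apply, H.TK1 i j (by omega) (by omega),
        H.TC1 i j (by omega) (by omega)]
    · rw [T_gt (y + 2) i (by omega) (by omega), T_gt (y + 2) j (by omega) (by omega),
        T_gt (y + 2) j (by omega) (by omega), T_gt (y + 2) i (by omega) (by omega),
        H.h1.comm i j (by omega) (by omega) (by omega)]

theorem TL1 (H : HY k) : TL 1 (k + 1) := by
  have e : ∀ i, 1 ≤ i → ∃ n, i = n + 1 := fun i h => ⟨i - 1, by omega⟩
  constructor
  · rintro i hi h v; obtain ⟨i, rfl⟩ := e i hi; exact H.a0 i (by omega) v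
  · rintro i hi h v; obtain ⟨i, rfl⟩ := e i hi; exact H.a1 i (by omega) v
  · rintro i hi h v; obtain ⟨i, rfl⟩ := e i hi; exact H.a2 i (by omega) v
  · rintro i hi h v; obtain ⟨i, rfl⟩ := e i hi; exact H.Tc i (by omega) v
  · rintro i hi h v; obtain ⟨i, rfl⟩ := e i hi; exact H.cT i (by omega) v
  · rintro i j hi hij h v; obtain ⟨i, rfl⟩ := e i hi; obtain ⟨j, rfl⟩ := e j (by omega)
    exact H.TC1 i j (by omega) (by omega) v
  · rintro i j hi hij h v; obtain ⟨i, rfl⟩ := e i (by omega); obtain ⟨j, rfl⟩ := e j (by omega)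
    exact H.TC2 i j (by omega) (by omega) v
  · rintro i j hi hij h v; obtain ⟨i, rfl⟩ := e i hi; obtain ⟨j, rfl⟩ := e j (by omega)
    exact H.TK1 i j (by omega) (by omega) v
  · rintro i j hi hij h v; obtain ⟨i, rfl⟩ := e i (by omega); obtain ⟨j, rfl⟩ := e j (by omega)
    exact H.TK2 i j (by omega) (by omega) v
  · rintro i hi h v; obtain ⟨i, rfl⟩ := e i hi; exact H.s1 i (by omega) v
  · rintro i hi h v; obtain ⟨i, rfl⟩ := e i hi; exact H.s2 i (by omega) v
  · rintro i hi h v; obtain ⟨i, rfl⟩ := e i hi; exact H.s3 i (by omega) v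
  · rintro i hi h v; obtain ⟨i, rfl⟩ := e i hi; exact H.s4 i (by omega) v

theorem TT1 (H : HY k) : TT 1 (k + 2) := by
  have e : ∀ i, 1 ≤ i → ∃ n, i = n + 1 := fun i h => ⟨i - 1, by omega⟩
  constructor
  · rintro i hi h v; obtain ⟨i, rfl⟩ := e i hi; exact H.TS i (by omega) v
  · rintro i hi h v; obtain ⟨i, rfl⟩ := e i hi; exact H.ST i (by omega) v
  · rintro i j hi hij h v; obtain ⟨i, rfl⟩ := e i hi; obtain ⟨j, rfl⟩ := e j (by omega)
    exact H.comm i j (by omega) (by omega) v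
  · rintro i hi h v; obtain ⟨i, rfl⟩ := e i hi; exact H.br i (by omega) v

end HY

/-! ### Induction step, generators of index zero -/

theorem TT.weak {a b : ℕ} (h : TT a k) (hab : a ≤ b) : TT b k :=
  ⟨fun i hi => h.TS i (by omega), fun i hi => h.ST i (by omega),
    fun i j hi => h.comm i j (by omega), fun i hi => h.br i (by omega)⟩

/-- `T_{a+j-1} ⋯ T_a` -/
noncomputable def Ua (a : ℕ) {k : ℕ} (j : ℕ) : M k →ₗ[ℂ] M k := chU (fun i => T (i + a)) j

theorem Ua_succ (a j : ℕ) (v : M k) : Ua a (j + 1) v = T (j + a) (Ua a j v) := rfl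

theorem Ua_int {k l : ℕ} (a : ℕ) (f : M k →ₗ[ℂ] M l) (j : ℕ)
    (h : ∀ i, i < j → ∀ v, f (T (i + a) v) = T (i + a) (f v)) (v : M k) :
    f (Ua a j v) = Ua a j (f v) := by
  induction j with
  | zero => rfl
  | succ j ih =>
    rw [Ua_succ, Ua_succ, h j (by omega), ih (fun i hi => h i (by omega))]

theorem Ua_U1 (j : ℕ) (v : M k) : Ua 1 j (T 0 v) = U (j + 1) v := by
  induction j with
  | zero => rfl
  | succ j ih => rw [Ua_succ, ih, U_succ (j + 1)]

theorem D_succ' (a j : ℕ) (v : M k) : D a (j + 1) v = S a (D (a + 1) j v) := by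
  induction j generalizing v with
  | zero => rw [D_succ, D_zero, D_zero, Nat.zero_add]
  | succ j ih => rw [D_succ, ih, D_succ, show j + (a + 1) = j + 1 + a by omega]

theorem cap_D_U (a y : ℕ)
    (hTS : ∀ i j, a ≤ i → i + 2 ≤ j → j ≤ a + y → ∀ w : M (k + 1), T i (S j w) = S j (T i w))
    (hK : ∀ i, a ≤ i → i + 1 ≤ a + y → ∀ w : M (k + 1), cap i (S (i + 1) w) = cap (i + 1) (T i w))
    (w : M (k + 1)) : cap a (D (a + 1) y w) = cap (y + a) (Ua a y w) := by
  induction y generalizing w with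
  | zero => rw [D_zero, Nat.zero_add]; rfl
  | succ y ih =>
    rw [D_succ, ih (fun i j h1 h2 h3 => hTS i j h1 h2 (by omega))
      (fun i h1 h2 => hK i h1 (by omega)),
      ← Ua_int a (S (y + (a + 1))) y
        (fun i hi v => (hTS (i + a) (y + (a + 1)) (by omega) (by omega) (by omega) v).symm),
      ← Nat.add_assoc, hK (y + a) (by omega) (by omega), Ua_succ, Nat.add_right_comm y 1 a]

theorem cap_D_cup (a y : ℕ)
    (hTS : ∀ i j, a ≤ i → i + 2 ≤ j → j ≤ a + y → ∀ w : M (k + 1), T i (S j w) = S j (T i w))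
    (hK : ∀ i, a ≤ i → i + 1 ≤ a + y → ∀ w : M (k + 1), cap i (S (i + 1) w) = cap (i + 1) (T i w))
    (hC : ∀ i, a ≤ i → i + 1 ≤ a + y → ∀ w : M k,
      T i (cup (a + y + 1) w) = cup (a + y + 1) (T i w))
    (h1 : ∀ w : M k, cap (a + y) (cup (a + y + 1) w) = w)
    (w : M k) : cap a (D (a + 1) y (cup (a + y + 1) w)) = Ua a y w := by
  rw [cap_D_U a y hTS hK, ← Ua_int a (cup (a + y + 1)) y
    (fun i hi v => (hC (i + a) (by omega) (by omega) v).symm), Nat.add_comm y a, h1]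

theorem T1_D (h : ∀ v : M k, T 1 (S 1 v) = v) (j : ℕ) (v : M k) :
    T 1 (D 1 (j + 1) v) = D 2 j v := by
  rw [D_succ', h]

namespace HY


theorem t0 (H : HY k) : TT 1 (k + 1) := H.h1.weak (by omega)

theorem z_a1 (H : HY k) (v : M (k + 1)) : cap 0 (cup 1 v) = v := by
  refine ext_θ (cap 0 ∘ₗ cup 1) LinearMap.id (fun x hx v => ?_) v
  change cap 0 (cup 1 (θ x v)) = θ x v
  rw [cup_ge x 0 (by omega) hx, cap_zs (x + 1) (by omega), cup_zero, U_θz x hx, rs_smul]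

theorem z_a2 (H : HY k) (v : M (k + 1)) : cap 1 (cup 0 v) = v := by
  rw [cup_zero, cap_eq 0 (by omega), D_zero]

theorem z_TC2 (H : HY k) (i : ℕ) (v : M (k + 1)) : T (i + 2) (cup 0 v) = cup 0 (T i v) := by
  rw [cup_zero, cup_zero, T_lt 0 i (by omega) (by omega)]

theorem z_TK2 (H : HY k) (i : ℕ) (hi : i + 1 < 2 * (k + 1)) (v : M (k + 2)) :
    cap 0 (T (i + 2) v) = T i (cap 0 v) := by
  refine ext_θ (cap 0 ∘ₗ T (i + 2)) (T i ∘ₗ cap 0) (fun x hx v => ?_) v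
  simp only [LinearMap.comp_apply]
  rcases x with _ | y
  · rw [T_lt 0 i (by omega) (by omega), cap_zz, cap_zz, map_smul]
  rw [cap_zs y (by omega), map_smul]
  rcases cs y i with ⟨m, rfl, h⟩ | rfl | rfl | ⟨w, rfl, h⟩
  · rw [T_lt (y + 1) (m + 1) (by omega) (by omega), cap_zs y (by omega),
      U_T_far H.h1 (m + 1) y (by omega) (by omega)]
  · rw [T_eq (y + 1) (by omega), cap_zs (y + 1) (by omega), U_succ]
  · rw [T_eq1 (i + 1) (by omega), map_sub, map_add, map_smul, map_smul, cap_zs i (by omega),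
      cap_zs (i + 1) (by omega), H.hk.KC2 0 i (by omega) (by omega),
      cap0_D H.h1 H.hl i (by omega), U_succ, Tsq H.h1 H.hl i (by omega) (by omega), map_smul]
    module
  · rw [T_gt (w + 2 + 1) (i + 1) (by omega) (by omega), cap_zs (w + 2) (by omega),
      U_T_near H.h1 i (w + 2) (by omega) (by omega)]

theorem z_TK1 (H : HY k) (j : ℕ) (h1j : 1 ≤ j) (hj : j + 1 ≤ 2 * (k + 1)) (v : M (k + 2)) :
    cap (j + 1) (T 0 v) = T 0 (cap (j + 1) v) := by
  refine ext_θ (cap (j + 1) ∘ₗ T 0) (T 0 ∘ₗ cap (j + 1)) (fun x hx v => ?_) v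
  simp only [LinearMap.comp_apply]
  rcases x with _ | y
  · obtain ⟨n, rfl⟩ : ∃ n, j = n + 1 := ⟨j - 1, by omega⟩
    rw [T_zz, map_smul, cap_lt 0 n (by omega) (by omega), T_zz]
  rw [T_zs y (by omega)]
  rcases cs (y + 1) j with ⟨n, rfl, h⟩ | rfl | h | ⟨w, h, h'⟩
  · rw [cap_D_far H.t0 H.TT1 H.TL1 (n + 2) y (by omega) (by omega),
      H.hk.KC1 (y + 1) n (by omega) (by omega), cap_lt (y + 1) n (by omega) (by omega),
      T_zs y (by omega)]
  · rw [cap_D_far H.t0 H.TT1 H.TL1 (y + 2) y (by omega) (by omega), H.a2 y (by omega),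
      cap_eq (y + 1) (by omega), T0_D H.h1 y (by omega)]
  · obtain rfl : y = j := by omega
    obtain ⟨n, rfl⟩ : ∃ n, y = n + 1 := ⟨y - 1, by omega⟩
    rw [D_succ, cap_D_far H.t0 H.TT1 H.TL1 (n + 2) n (by omega) (by omega),
      BT.kSc1 H.TT1 H.TL1 (n + 1) (by omega) (by omega), cap_eq1 (n + 1) (by omega), map_smul,
      map_smul, T0_D H.h1 n (by omega)]
  · obtain ⟨u, rfl⟩ : ∃ n, w = n + 1 := ⟨w - 1, by omega⟩
    obtain rfl : y = u + 2 := by omega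
    rw [cap_D_near H.t0 H.TT1 H.TL1 j u (by omega) (by omega) (by omega) (by omega),
      H.hk.KC2 j (u + 1) (by omega) (by omega), cap_gt (u + 1) j (by omega) (by omega),
      T_zs u (by omega)]

theorem z_TC1 (H : HY k) (j : ℕ) (h1j : 1 ≤ j) (hj : j + 1 ≤ 2 * (k + 1)) (v : M (k + 1)) :
    T 0 (cup (j + 1) v) = cup (j + 1) (T 0 v) := by
  refine ext_θ (T 0 ∘ₗ cup (j + 1)) (cup (j + 1) ∘ₗ T 0) (fun x hx v => ?_) v
  simp only [LinearMap.comp_apply]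
  obtain ⟨n, rfl⟩ : ∃ n, j = n + 1 := ⟨j - 1, by omega⟩
  rcases x with _ | y
  · rw [T_zz, map_smul, cup_lt 0 n (by omega) (by omega), T_zz]
  rw [T_zs y (by omega)]
  rcases le_or_gt (y + 1) n with h | h
  · rw [cup_lt (y + 1) n h hx, T_zs y (by omega),
      ← D_cup_far H.t0 H.TT1 H.TL1 (n + 2) y (by omega) (by omega),
      H.hk.CC (y + 1) n h (by omega)]
  · rw [cup_ge (y + 1) (n + 1) (by omega) hx, T_zs (y + 2) (by omega),
      H.hk.CC (n + 1) (y + 1) (by omega) (by omega),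
      D_cup_near H.t0 H.TT1 H.TL1 (n + 1) y (by omega) (by omega) (by omega) (by omega)]

theorem z_comm (H : HY k) (j : ℕ) (h1j : 1 ≤ j) (hj : j + 1 ≤ 2 * (k + 1)) (v : M (k + 2)) :
    T 0 (T (j + 1) v) = T (j + 1) (T 0 v) := by
  refine ext_θ (T 0 ∘ₗ T (j + 1)) (T (j + 1) ∘ₗ T 0) (fun x hx v => ?_) v
  simp only [LinearMap.comp_apply]
  have e1 : ∀ v : M (k + 1), T 0 (T (j + 1) (θ j v)) = T (j + 1) (T 0 (θ j v)) := by
    intro v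
    obtain ⟨y, rfl⟩ : ∃ n, j = n + 1 := ⟨j - 1, by omega⟩
    rw [T_eq (y + 1) (by omega), T_zs (y + 1) (by omega), T_zs y (by omega), D_succ,
      BT.Sl1 H.TT1 H.TL1 (y + 1) (by omega) (by omega),
      D_T_far H.TT1 (y + 2) y (by omega) (by omega)]
  rcases x with _ | y
  · obtain ⟨n, rfl⟩ : ∃ n, j = n + 1 := ⟨j - 1, by omega⟩
    rw [T_zz, map_smul, T_lt 0 n (by omega) (by omega), T_zz]
  rcases cs (y + 1) j with ⟨n, rfl, h⟩ | rfl | h | ⟨w, h, h'⟩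
  · rw [T_zs y (by omega), T_lt (y + 1) n h (by omega), T_zs y (by omega),
      ← D_T_far H.TT1 (n + 2) y (by omega) (by omega),
      H.TL1.TC2 n (y + 1) (by omega) (by omega) (by omega)]
  · exact e1 v
  · rw [h, ← T_eq j (by omega) v]
    refine (cl_comm (T (j + 1)) (T 0) _ (H.sq j (by omega)) (fun w => ?_) _ (e1 v).symm).symm
    rw [LinearMap.comp_apply, LinearMap.comp_apply, H.z_TK1 j h1j hj, H.z_TC1 j h1j hj]
  · obtain ⟨u, rfl⟩ : ∃ n, w = n + 1 := ⟨w - 1, by omega⟩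
    obtain rfl : y = u + 2 := by omega
    rw [T_zs (u + 2) (by omega), T_gt (u + 2 + 1) j (by omega) (by omega), T_zs (u + 2) (by omega),
      ← D_T_near H.TT1 j (u + 2) (by omega) (by omega) (by omega),
      H.TL1.TC1 j (u + 3) (by omega) (by omega) (by omega)]

theorem z_TS_comm (H : HY k) (j : ℕ) (h1j : 1 ≤ j) (hj : j + 1 ≤ 2 * (k + 1)) (v : M (k + 2)) :
    T 0 (S (j + 1) v) = S (j + 1) (T 0 v) := by
  conv_rhs => rw [← H.TS j hj v]
  rw [H.z_comm j h1j hj, H.ST j hj]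

theorem z_s1 (H : HY k) (v : M (k + 1)) : T 0 (T 1 (cup 0 v)) = cup 1 v := by
  rw [cup_zero, T_eq 0 (by omega), T_zs 0 (by omega), D_zero]

theorem z_s2 (H : HY k) (v : M (k + 1)) : T 1 (T 0 (cup 1 v)) = cup 0 v := by
  refine ext_θ (T 1 ∘ₗ T 0 ∘ₗ cup 1) (cup 0) (fun x hx v => ?_) v
  simp only [LinearMap.comp_apply]
  rw [cup_ge x 0 (by omega) hx, T_zs (x + 1) (by omega), T1_D (H.TS 0 (by omega)),
    H.hk.CC 0 x (by omega) (by omega), ← D_int (cup 0) 0 2 x, D_cup_eq H.h1 H.hl x (by omega)]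
  intro i hi v
  rw [cup_zero, cup_zero, S_lt 0 i (by omega) (by omega) _ (by omega)]
  rfl

theorem z_kTc1 (H : HY k) (v : M (k + 1)) : cap 1 (T 0 (cup 1 v)) = r • v := by
  have h := H.cT 0 (by omega) (T 0 (cup 1 v))
  rw [Nat.zero_add, H.z_s2, H.z_a2] at h
  conv_rhs => rw [h]
  exact (rs_smul _).symm

theorem z_s3 (H : HY k) (v : M (k + 2)) : cap 1 (T 0 (T 1 v)) = cap 0 v := by
  refine ext_θ (cap 1 ∘ₗ T 0 ∘ₗ T 1) (cap 0) (fun x hx v => ?_) v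
  simp only [LinearMap.comp_apply]
  rcases x with _ | _ | y
  · rw [T_eq 0 (by omega), T_zs 0 (by omega), D_zero, H.a0 0 (by omega), cap_zz]
  · rw [Nat.zero_add, T_eq1 0 (by omega)]
    simp only [map_sub, map_add, map_smul]
    rw [T_zz, T_zs 0 (by omega), D_zero, D_zero, H.z_kTc1, H.a0 0 (by omega), map_smul,
      cap_eq 0 (by omega), D_zero, cap_zs 0 (by omega), U_zero, smul_smul (z * s) r,
      show (z * s) * r = z by linear_combination z * rs, smul_smul, zd]
    module
  · rw [T_gt (y + 2) 0 (by omega) (by omega), T_zs (y + 1) (by omega), D_succ',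
      cS H.TT1 H.TL1 1 (by omega) (by omega), cap_zs (y + 1) (by omega), ← Ua_U1]
    have h := cap_D_cup 1 y (fun i j h1 h2 h3 => H.TT1.TS_comm i j h1 h2 (by omega))
      (fun i h1 h2 => BT.Kl1 H.TT1 H.TL1 i h1 (by omega))
      (fun i h1 h2 => H.TL1.TC1 i _ h1 (by omega) (by omega))
      (H.TL1.a1 (1 + y) (by omega) (by omega)) (T 0 v)
    rw [show 1 + y + 1 = y + 1 + 1 by omega] at h
    rw [h]

theorem z_SK2 (H : HY k) (i : ℕ) (hi : i + 1 < 2 * (k + 1)) (v : M (k + 2)) :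
    cap 0 (S (i + 2) v) = S i (cap 0 v) := by
  conv_rhs => rw [← H.TS (i + 1) (by omega) v]
  rw [H.z_TK2 i hi, H.h1.ST i (by omega) (by omega)]

theorem z_s4 (H : HY k) (v : M (k + 2)) : cap 0 (T 1 (T 0 v)) = cap 1 v := by
  refine ext_θ (cap 0 ∘ₗ T 1 ∘ₗ T 0) (cap 1) (fun x hx v => ?_) v
  simp only [LinearMap.comp_apply]
  rcases x with _ | _ | y
  · rw [T_zz, map_smul, T_eq 0 (by omega), map_smul, cap_zs 0 (by omega), sr_smul,
      cap_eq 0 (by omega)]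
    rfl
  · rw [T_zs 0 (by omega), D_zero, H.Tc 0 (by omega), map_smul, H.z_a1, cap_eq1 0 (by omega)]
    rfl
  · rw [T_zs (y + 1) (by omega), T1_D (H.TS 0 (by omega)), D_int (cap 0) 2 0 y,
      H.hk.KC2 0 y (by omega) (by omega), D_cup_eq H.h1 H.hl y (by omega),
      cap_gt y 0 (by omega) (by omega)]
    intro i hi v
    exact H.z_SK2 i (by omega) v

theorem z_cT (H : HY k) (v : M (k + 2)) : cap 0 (T 0 v) = s • cap 0 v := by
  refine ext_θ (cap 0 ∘ₗ T 0) (s • cap 0) (fun x hx v => ?_) v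
  change cap 0 (T 0 (θ x v)) = s • cap 0 (θ x v)
  rcases x with _ | y
  · rw [T_zz, map_smul]
  · rw [T_zs y (by omega), cap_zs y (by omega), sr_smul]
    have h := cap_D_cup 0 y (fun i j h1 h2 h3 w => ?_) (fun i h1 h2 w => ?_)
      (fun i h1 h2 w => ?_) (fun w => ?_) v
    · rw [show 0 + y + 1 = y + 1 by omega] at h
      exact h
    · rcases i with _ | i
      · obtain ⟨j, rfl⟩ : ∃ n, j = n + 1 := ⟨j - 1, by omega⟩
        exact H.z_TS_comm j (by omega) (by omega) w
      · exact H.TT1.TS_comm _ j (by omega) h2 (by omega) w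
    · rcases i with _ | i
      · rw [← H.z_s3, H.TS 0 (by omega)]
      · exact BT.Kl1 H.TT1 H.TL1 _ (by omega) (by omega) w
    · rcases i with _ | i
      · exact H.z_TC1 _ (by omega) (by omega) w
      · exact H.TL1.TC1 _ _ (by omega) (by omega) (by omega) w
    · rw [Nat.zero_add]
      rcases y with _ | y
      · exact H.z_a1 w
      · exact H.a1 y (by omega) w

theorem z_Tc (H : HY k) (v : M (k + 1)) : T 0 (cup 0 v) = s • cup 0 v := by
  rw [cup_zero, T_zz]

theorem z_sq (H : HY k) (v : M (k + 2)) :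
    T 0 (T 0 v) = v + z • T 0 v - (z * s) • cup 0 (cap 0 v) := by
  refine ext_θ (T 0 ∘ₗ T 0) (LinearMap.id + z • T 0 - (z * s) • cup 0 ∘ₗ cap 0) (fun x hx v => ?_) v
  change T 0 (T 0 (θ x v)) = θ x v + z • T 0 (θ x v) - (z * s) • cup 0 (cap 0 (θ x v))
  rcases x with _ | x
  · rw [T_zz, map_smul, T_zz, cap_zz, map_smul, cup_zero, smul_smul s s, ss]
    module
  induction x with
  | zero =>
    have h := H.z_s2 v
    have h' := H.ST 0 (by omega) (T 0 (cup 1 v))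
    rw [Nat.zero_add, h, cup_zero, S_eq 0 (by omega), D_zero] at h'
    rw [T_zs 0 (by omega), D_zero, ← h', cap_zs 0 (by omega), U_zero, map_smul, cup_zero,
      smul_smul (z * s) r, show (z * s) * r = z by linear_combination z * rs]
    module
  | succ x ih =>
    rw [← T_eq (x + 1) (by omega), H.z_comm (x + 1) (by omega) (by omega),
      H.z_comm (x + 1) (by omega) (by omega), ih (by omega), H.z_TK2 x (by omega), ← H.z_TC2]
    simp only [map_sub, map_add, map_smul]

theorem z_TS (H : HY k) (v : M (k + 2)) : T 0 (S 0 v) = v := by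
  rw [S_def, map_sub, map_smul, map_sub, H.z_Tc, H.z_sq]
  module

theorem z_ST (H : HY k) (v : M (k + 2)) : S 0 (T 0 v) = v :=
  ST_of_TS 0 H.z_TS H.z_Tc H.z_cT v

theorem z_br (H : HY k) (v : M (k + 2)) : T 0 (T 1 (T 0 v)) = T 1 (T 0 (T 1 v)) := by
  refine ext_θ (T 0 ∘ₗ T 1 ∘ₗ T 0) (T 1 ∘ₗ T 0 ∘ₗ T 1) (fun x hx v => ?_) v
  simp only [LinearMap.comp_apply]
  have e0 : ∀ v : M (k + 1), T 0 (T 1 (T 0 (θ 0 v))) = T 1 (T 0 (T 1 (θ 0 v))) := fun v => by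
    rw [T_zz, map_smul, T_eq 0 (by omega), map_smul, T_zs 0 (by omega), D_zero, H.Tc 0 (by omega)]
  rcases x with _ | _ | y
  · exact e0 v
  · rw [← T_eq 0 (by omega) v]
    refine (cl_br (T 1) (T 0) _ (cup 0 ∘ₗ cap 0) (H.sq 0 (by omega)) H.z_sq
      (fun w => ?_) _ (e0 v).symm).symm
    rw [LinearMap.comp_apply, LinearMap.comp_apply, Nat.zero_add, H.z_s2, H.z_s4]
  · rw [T_zs (y + 1) (by omega), T1_D (H.TS 0 (by omega)), T_gt (y + 2) 0 (by omega) (by omega),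
      T_zs (y + 1) (by omega), T1_D (H.TS 0 (by omega)), ← H.z_TC1 (y + 1) (by omega) (by omega),
      D_int (T 0) 2 2 y]
    intro i hi v
    exact H.z_TS_comm (i + 1) (by omega) (by omega) v

theorem TL0 (H : HY k) : TL 0 (k + 1) := by
  constructor
  · rintro (_ | i) hi h v
    · rw [cup_zero, cap_zz]
    · exact H.TL1.a0 _ (by omega) h v
  · rintro (_ | i) hi h v
    · exact H.z_a1 v
    · exact H.TL1.a1 _ (by omega) h v
  · rintro (_ | i) hi h v
    · exact H.z_a2 v
    · exact H.TL1.a2 _ (by omega) h v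
  · rintro (_ | i) hi h v
    · exact H.z_Tc v
    · exact H.TL1.Tc _ (by omega) h v
  · rintro (_ | i) hi h v
    · exact H.z_cT v
    · exact H.TL1.cT _ (by omega) h v
  · rintro (_ | i) j hi hij h v
    · obtain ⟨j, rfl⟩ : ∃ n, j = n + 1 := ⟨j - 1, by omega⟩
      exact H.z_TC1 j (by omega) h v
    · exact H.TL1.TC1 _ _ (by omega) hij h v
  · rintro i (_ | j) hi hij h v
    · exact H.z_TC2 i v
    · exact H.TL1.TC2 _ _ (by omega) hij h v
  · rintro (_ | i) j hi hij h v
    · obtain ⟨j, rfl⟩ : ∃ n, j = n + 1 := ⟨j - 1, by omega⟩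
      exact H.z_TK1 j (by omega) h v
    · exact H.TL1.TK1 _ _ (by omega) hij h v
  · rintro i (_ | j) hi hij h v
    · exact H.z_TK2 i h v
    · exact H.TL1.TK2 _ _ (by omega) hij h v
  · rintro (_ | i) hi h v
    · exact H.z_s1 v
    · exact H.TL1.s1 _ (by omega) h v
  · rintro (_ | i) hi h v
    · exact H.z_s2 v
    · exact H.TL1.s2 _ (by omega) h v
  · rintro (_ | i) hi h v
    · exact H.z_s3 v
    · exact H.TL1.s3 _ (by omega) h v
  · rintro (_ | i) hi h v
    · exact H.z_s4 v
    · exact H.TL1.s4 _ (by omega) h v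

theorem TT0 (H : HY k) : TT 0 (k + 2) := by
  constructor
  · rintro (_ | i) hi h v
    · exact H.z_TS v
    · exact H.TT1.TS _ (by omega) h v
  · rintro (_ | i) hi h v
    · exact H.z_ST v
    · exact H.TT1.ST _ (by omega) h v
  · rintro (_ | i) j hi hij h v
    · obtain ⟨j, rfl⟩ : ∃ n, j = n + 1 := ⟨j - 1, by omega⟩
      exact H.z_comm j (by omega) (by omega) v
    · exact H.TT1.comm _ _ (by omega) hij h v
  · rintro (_ | i) hi h v
    · exact H.z_br v
    · exact H.TT1.br _ (by omega) h v

theorem next (H : HY k) : HY (k + 1) :=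
  ⟨H.h1, H.TT0, H.TL0, KL_step H.h1 H.TT0 H.TL0 (fun k' h => by
    obtain rfl : k = k' := by omega
    exact H.hk)⟩

end HY

theorem HY_zero : HY 0 := by
  have h0 : TT 0 0 := ⟨fun i _ h => by omega, fun i _ h => by omega,
    fun i j _ _ h => by omega, fun i _ h => by omega⟩
  have Tc : ∀ v : M 0, T 0 (cup 0 v) = s • cup 0 v := fun v => by rw [cup_zero, T_zz]
  have cT : ∀ v : M 1, cap 0 (T 0 v) = s • cap 0 v := by
    refine ext_θ (cap 0 ∘ₗ T 0) (s • cap 0) (fun x hx v => ?_)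
    obtain rfl : x = 0 := by omega
    change cap 0 (T 0 (θ 0 v)) = s • cap 0 (θ 0 v)
    rw [T_zz, map_smul]
  have TS : ∀ v : M 1, T 0 (S 0 v) = v := by
    refine ext_θ (T 0 ∘ₗ S 0) LinearMap.id (fun x hx v => ?_)
    obtain rfl : x = 0 := by omega
    change T 0 (S 0 (θ 0 v)) = θ 0 v
    rw [S_def, map_sub, map_smul, map_sub, T_zz, map_smul, T_zz, cap_zz, map_smul, cup_zero,
      map_smul, T_zz, smul_smul s s, ss]
    module
  have h1 : TT 0 1 := by
    refine ⟨fun i _ h => ?_, fun i _ h => ?_, fun i j _ _ h => by omega, fun i _ h => by omega⟩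
    · obtain rfl : i = 0 := by omega
      exact TS
    · obtain rfl : i = 0 := by omega
      exact ST_of_TS 0 TS Tc cT
  have hl : TL 0 0 := by
    constructor
    · intro i _ h v
      obtain rfl : i = 0 := by omega
      rw [cup_zero, cap_zz]
    · intro i _ h; omega
    · intro i _ h; omega
    · intro i _ h
      obtain rfl : i = 0 := by omega
      exact Tc
    · intro i _ h
      obtain rfl : i = 0 := by omega
      exact cT
    · intro i j _ _ h; omega
    · intro i j _ _ h; omega
    · intro i j _ _ h; omega
    · intro i j _ _ h; omega
    · intro i _ h; omega
    · intro i _ h; omega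
    · intro i _ h; omega
    · intro i _ h; omega
  exact ⟨h0, h1, hl, KL_step h0 h1 hl (fun k' h => by omega)⟩

theorem HY_all (k : ℕ) : HY k := by
  induction k with
  | zero => exact HY_zero
  | succ k ih => exact ih.next
/-! ### Representation of the BMW algebra -/

theorem s_inv : (s : ℂ) = r⁻¹ := eq_inv_of_mul_eq_one_right rs

theorem bmw_ind {r q : ℂ} {n : ℕ} {P : BMW r q n → Prop}
    (halg : ∀ c : ℂ, P (algebraMap ℂ _ c)) (hT : ∀ i, P (BMW.T r q n i))
    (hS : ∀ i, P (BMW.S r q n i)) (hadd : ∀ x y, P x → P y → P (x + y))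
    (hmul : ∀ x y, P x → P y → P (x * y)) (x : BMW r q n) : P x := by
  obtain ⟨a, rfl⟩ := RingQuot.mkAlgHom_surjective ℂ (BMWRel r q n) x
  induction a using FreeAlgebra.induction with
  | grade0 c => rw [AlgHom.commutes]; exact halg c
  | grade1 i =>
    rcases i with i | i
    · exact hT i
    · exact hS i
  | mul a b ha hb => rw [map_mul]; exact hmul _ _ ha hb
  | add a b ha hb => rw [map_add]; exact hadd _ _ ha hb

/-- Action of generators. -/
noncomputable def gen (n : ℕ) : BMWGenerators n → Module.End ℂ (M n)
  | Sum.inl i => T (i : ℕ)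
  | Sum.inr i => S (i : ℕ)

/-- Representation of the free algebra. -/
noncomputable def rho0 (n : ℕ) : FreeAlgebra ℂ (BMWGenerators n) →ₐ[ℂ] Module.End ℂ (M n) :=
  FreeAlgebra.lift ℂ (gen n)

theorem rho0_T (n : ℕ) (i : Fin (n - 1)) : rho0 n (bmwT n i) = T (i : ℕ) := by
  simp [rho0, bmwT, gen]

theorem rho0_S (n : ℕ) (i : Fin (n - 1)) : rho0 n (bmwS n i) = S (i : ℕ) := by
  simp [rho0, bmwS, gen]

theorem rho0_E {q : ℂ} (hz : z = q - q⁻¹) (hz0 : (z : ℂ) ≠ 0) (n : ℕ) (i : Fin (n + 1 - 1))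
    (v : M (n + 1)) : rho0 (n + 1) (bmwE q (n + 1) i) v = cup (i : ℕ) (cap (i : ℕ) v) := by
  rw [bmwE, map_sub, map_smul, map_sub, rho0_T, rho0_S, map_one, LinearMap.sub_apply,
    LinearMap.smul_apply, LinearMap.sub_apply, S_def, ← hz, sub_sub_cancel, smul_smul,
    inv_mul_cancel₀ hz0, one_smul]
  exact sub_sub_cancel _ _

theorem rho0_rel {q : ℂ} (hz : z = q - q⁻¹) (hz0 : (z : ℂ) ≠ 0) (n : ℕ) :
    ∀ x y, BMWRel r q (n + 1) x y → rho0 (n + 1) x = rho0 (n + 1) y := by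
  have H := HY_all n
  intro x y h
  refine LinearMap.ext fun v => ?_
  cases h with
  | inv_right i =>
    have hi := i.2
    rw [map_mul, map_one, rho0_T, rho0_S]
    exact H.h1.TS i (by omega) (by omega) v
  | inv_left i =>
    have hi := i.2
    rw [map_mul, map_one, rho0_T, rho0_S]
    exact H.h1.ST i (by omega) (by omega) v
  | braid i j h =>
    have hj := j.2
    simp only [map_mul, rho0_T, ← h]
    exact H.h1.br i (by omega) (by omega) v
  | comm i j h =>
    have hj := j.2
    simp only [map_mul, rho0_T]
    exact H.h1.comm i j (by omega) (by omega) (by omega) v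
  | eT i =>
    have hi := i.2
    rw [map_mul, map_smul, Module.End.mul_apply, LinearMap.smul_apply, rho0_E hz hz0,
      rho0_E hz hz0, rho0_T, H.hl.cT i (by omega) (by omega), map_smul, s_inv]
  | eTe i j h =>
    have hj := j.2
    rw [map_mul, map_mul, map_smul, Module.End.mul_apply, Module.End.mul_apply,
      LinearMap.smul_apply, rho0_E hz hz0,
      rho0_E hz hz0, rho0_T, ← h, kTc1 H.h1 H.hl i (by omega) (by omega), map_smul]
  | eSe i j h =>
    have hj := j.2
    rw [map_mul, map_mul, map_smul, Module.End.mul_apply, Module.End.mul_apply,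
      LinearMap.smul_apply, rho0_E hz hz0,
      rho0_E hz hz0, rho0_S, ← h, kSc1 H.h1 H.hl i (by omega) (by omega), map_smul, s_inv]

/-- The representation of the BMW algebra. -/
noncomputable def rho {q : ℂ} (hz : z = q - q⁻¹) (hz0 : (z : ℂ) ≠ 0) (n : ℕ) :
    BMW r q (n + 1) →ₐ[ℂ] Module.End ℂ (M (n + 1)) :=
  RingQuot.liftAlgHom ℂ ⟨rho0 (n + 1), @rho0_rel _ q hz hz0 n⟩

section
variable {q : ℂ} (hz : z = q - q⁻¹) (hz0 : (z : ℂ) ≠ 0)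

theorem rho_T (n : ℕ) (i : Fin (n + 1 - 1)) : rho hz hz0 n (BMW.T r q (n + 1) i) = T (i : ℕ) := by
  rw [rho, BMW.T, RingQuot.liftAlgHom_mkAlgHom_apply, rho0_T]

theorem rho_S (n : ℕ) (i : Fin (n + 1 - 1)) : rho hz hz0 n (BMW.S r q (n + 1) i) = S (i : ℕ) := by
  rw [rho, BMW.S, RingQuot.liftAlgHom_mkAlgHom_apply, rho0_S]

theorem rho_E (n : ℕ) (i : Fin (n + 1 - 1)) (v : M (n + 1)) :
    rho hz hz0 n (BMW.E r q (n + 1) i) v = cup (i : ℕ) (cap (i : ℕ) v) := by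
  rw [rho, BMW.E, RingQuot.liftAlgHom_mkAlgHom_apply, rho0_E hz hz0]

end

/-- The nested cups. -/
noncomputable def C : ∀ n : ℕ, M n
  | 0 => fun _ => 1
  | n + 1 => cup n (C n)

/-- The nested caps. -/
noncomputable def K : ∀ n : ℕ, M n →ₗ[ℂ] ℂ
  | 0 => LinearMap.proj (R := ℂ) (φ := fun _ : Unit => ℂ) ()
  | n + 1 => K n ∘ₗ cap n

theorem C_succ (n : ℕ) : C (n + 1) = cup n (C n) := rfl
theorem K_succ (n : ℕ) (v : M (n + 1)) : K (n + 1) v = K n (cap n v) := rfl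

theorem C_flip (n : ℕ) : ∀ i, i + 2 ≤ n → T i (C n) = T (2 * n - 2 - i) (C n) := by
  induction n with
  | zero => intro i hi; omega
  | succ n ih =>
    intro i hi
    have H := HY_all n
    by_cases h : i + 2 ≤ n
    · rw [C_succ, H.hl.TC1 i n (by omega) h (by omega), ih i h,
        show 2 * (n + 1) - 2 - i = (2 * n - 2 - i) + 2 by omega,
        H.hl.TC2 _ n (by omega) (by omega) (by omega)]
    · obtain ⟨m, rfl⟩ : ∃ m, n = m + 1 := ⟨n - 1, by omega⟩
      obtain rfl : i = m := by omega
      have H' := HY_all i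
      rw [show 2 * (i + 1 + 1) - 2 - i = i + 1 + 1 by omega, C_succ,
        ← Sl2 H.h1 H.hl i (by omega) (by omega), ← Sl1 H.h1 H.hl (i + 1) (by omega) (by omega),
        C_succ, ← H'.hk.CC i i le_rfl (by omega)]

theorem K_flip (n : ℕ) : ∀ i, i + 2 ≤ n → ∀ v, K n (T i v) = K n (T (2 * n - 2 - i) v) := by
  induction n with
  | zero => intro i hi; omega
  | succ n ih =>
    intro i hi v
    have H := HY_all n
    by_cases h : i + 2 ≤ n
    · rw [K_succ, K_succ, H.hl.TK1 i n (by omega) h (by omega), ih i h,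
        show 2 * (n + 1) - 2 - i = (2 * n - 2 - i) + 2 by omega,
        H.hl.TK2 _ n (by omega) (by omega) (by omega)]
    · obtain ⟨m, rfl⟩ : ∃ m, n = m + 1 := ⟨n - 1, by omega⟩
      obtain rfl : i = m := by omega
      have H' := HY_all i
      rw [show 2 * (i + 1 + 1) - 2 - i = i + 1 + 1 by omega, K_succ (i + 1), K_succ (i + 1),
        ← Kl1 H.h1 H.hl i (by omega) (by omega), ← Kl2 H.h1 H.hl (i + 1) (by omega) (by omega),
        K_succ i, K_succ i, ← H'.hk.KK i i le_rfl (by omega)]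

theorem T_comm_flip (n i j : ℕ) (hi : i + 2 ≤ n + 1) (hj : j + 2 ≤ n + 1) (v : M (n + 1)) :
    T (2 * (n + 1) - 2 - j) (T i v) = T i (T (2 * (n + 1) - 2 - j) v) :=
  ((HY_all n).h1.comm _ _ (by omega) (by omega) (by omega) v).symm

theorem inv_comm {V : Type*} {A B B' : V → V} (h1 : ∀ v, B (B' v) = v) (h2 : ∀ v, B' (B v) = v)
    (h : ∀ v, A (B v) = B (A v)) (v : V) : A (B' v) = B' (A v) := by
  rw [← h2 (A (B' v)), ← h, h1]

section
variable {q : ℂ} (hz : z = q - q⁻¹) (hz0 : (z : ℂ) ≠ 0)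

theorem comm_rho (n : ℕ) (B : Module.End ℂ (M (n + 1)))
    (hT : ∀ i, i + 2 ≤ n + 1 → ∀ v, B (T i v) = T i (B v)) (x : BMW r q (n + 1)) :
    ∀ v, B (rho hz hz0 n x v) = rho hz hz0 n x (B v) := by
  have H := HY_all n
  induction x using bmw_ind with
  | halg c => intro v; rw [AlgHom.commutes]; exact map_smul B c v
  | hT i => intro v; rw [rho_T]; have := i.2; exact hT i (by omega) v
  | hS i =>
    intro v; rw [rho_S]; have := i.2
    exact inv_comm (H.h1.TS i (by omega) (by omega)) (H.h1.ST i (by omega) (by omega))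
      (hT i (by omega)) v
  | hadd x y hx hy =>
    intro v
    rw [map_add, LinearMap.add_apply, map_add, hx, hy, LinearMap.add_apply]
  | hmul x y hx hy =>
    intro v
    rw [map_mul, Module.End.mul_apply, hx, hy, Module.End.mul_apply]

theorem exists_star (n : ℕ) (y : BMW r q (n + 1)) : ∃ B : Module.End ℂ (M (n + 1)),
    (∀ (x : BMW r q (n + 1)) v, B (rho hz hz0 n x v) = rho hz hz0 n x (B v)) ∧
    rho hz hz0 n y (C (n + 1)) = B (C (n + 1)) ∧
    ∀ v, K (n + 1) (rho hz hz0 n y v) = K (n + 1) (B v) := by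
  have H := HY_all n
  induction y using bmw_ind with
  | halg c =>
    refine ⟨algebraMap ℂ _ c, fun x v => ?_, ?_, fun v => ?_⟩
    · exact (map_smul (rho hz hz0 n x) c v).symm
    · rw [AlgHom.commutes]
    · rw [AlgHom.commutes]
  | hT i =>
    have hi := i.2
    refine ⟨T (2 * (n + 1) - 2 - i), comm_rho hz hz0 n _ fun j hj v =>
      T_comm_flip n j i hj (by omega) v, ?_, fun v => ?_⟩
    · rw [rho_T]; exact C_flip (n + 1) i (by omega)
    · rw [rho_T]; exact K_flip (n + 1) i (by omega) v
  | hS i =>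
    have hi := i.2
    have hc := fun j (hj : j + 2 ≤ n + 1) v => inv_comm
      (H.h1.TS (2 * (n + 1) - 2 - i) (by omega) (by omega))
      (H.h1.ST (2 * (n + 1) - 2 - i) (by omega) (by omega))
      (fun v => (T_comm_flip n j i hj (by omega) v).symm) v
    have hcc := inv_comm (H.h1.TS i (by omega) (by omega)) (H.h1.ST i (by omega) (by omega))
      (fun v => (hc i (by omega) v).symm)
    refine ⟨S (2 * (n + 1) - 2 - i), comm_rho hz hz0 n _ fun j hj v => (hc j hj v).symm,
      ?_, fun v => ?_⟩
    · rw [rho_S]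
      conv_lhs => rw [← H.h1.ST (2 * (n + 1) - 2 - i) (by omega) (by omega) (C (n + 1)),
        ← C_flip (n + 1) i (by omega), ← hcc, H.h1.ST i (by omega) (by omega)]
    · rw [rho_S]
      conv_lhs => rw [← H.h1.TS (2 * (n + 1) - 2 - i) (by omega) (by omega) (S i v),
        ← K_flip (n + 1) i (by omega), hcc, H.h1.TS i (by omega) (by omega)]
  | hadd x y hx hy =>
    obtain ⟨A, a1, a2, a3⟩ := hx
    obtain ⟨B, b1, b2, b3⟩ := hy
    refine ⟨A + B, fun w v => ?_, ?_, fun v => ?_⟩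
    · rw [LinearMap.add_apply, a1, b1, LinearMap.add_apply, map_add]
    · rw [map_add, LinearMap.add_apply, a2, b2, LinearMap.add_apply]
    · rw [map_add, LinearMap.add_apply, LinearMap.add_apply, map_add, map_add, a3, b3]
  | hmul x y hx hy =>
    obtain ⟨A, a1, a2, a3⟩ := hx
    obtain ⟨B, b1, b2, b3⟩ := hy
    refine ⟨B * A, fun w v => ?_, ?_, fun v => ?_⟩
    · rw [Module.End.mul_apply, a1, b1, Module.End.mul_apply]
    · rw [map_mul, Module.End.mul_apply, b2, ← b1, a2, Module.End.mul_apply]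
    · rw [map_mul, Module.End.mul_apply, Module.End.mul_apply, a3, a1, b3]

/-- The trace. -/
noncomputable def tr (n : ℕ) : BMW r q (n + 1) →ₗ[ℂ] ℂ :=
  ((d : ℂ) ^ (n + 1))⁻¹ • (K (n + 1) ∘ₗ (LinearMap.applyₗ (C (n + 1))) ∘ₗ
    (rho hz hz0 n).toLinearMap)

theorem tr_apply (n : ℕ) (x : BMW r q (n + 1)) :
    tr hz hz0 n x = ((d : ℂ) ^ (n + 1))⁻¹ * K (n + 1) (rho hz hz0 n x (C (n + 1))) := rfl

theorem tr_comm (n : ℕ) (x y : BMW r q (n + 1)) :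
    tr hz hz0 n (x * y) = tr hz hz0 n (y * x) := by
  obtain ⟨B, b1, b2, b3⟩ := exists_star hz hz0 n y
  rw [tr_apply, tr_apply, map_mul, map_mul, Module.End.mul_apply, Module.End.mul_apply, b2, b3, b1]

variable (ι : ∀ k : ℕ, BMW r q (k + 1) →ₐ[ℂ] BMW r q (k + 2))
    (hιT : ∀ (k : ℕ) (i : Fin ((k + 1) - 1)),
      ι k (BMW.T r q (k + 1) i) = BMW.T r q (k + 2) (Fin.castLE (Nat.le_succ k) i))
    (hιS : ∀ (k : ℕ) (i : Fin ((k + 1) - 1)),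
      ι k (BMW.S r q (k + 1) i) = BMW.S r q (k + 2) (Fin.castLE (Nat.le_succ k) i))

theorem rho_cup (ι : ∀ k : ℕ, BMW r q (k + 1) →ₐ[ℂ] BMW r q (k + 2))
    (hιT : ∀ (k : ℕ) (i : Fin ((k + 1) - 1)),
      ι k (BMW.T r q (k + 1) i) = BMW.T r q (k + 2) (Fin.castLE (Nat.le_succ k) i))
    (hιS : ∀ (k : ℕ) (i : Fin ((k + 1) - 1)),
      ι k (BMW.S r q (k + 1) i) = BMW.S r q (k + 2) (Fin.castLE (Nat.le_succ k) i)) (n : ℕ)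
    (x : BMW r q (n + 1)) :
    (∀ v, rho hz hz0 (n + 1) (ι n x) (cup (n + 1) v) = cup (n + 1) (rho hz hz0 n x v)) ∧
    ∀ v, cap (n + 1) (rho hz hz0 (n + 1) (ι n x) v) = rho hz hz0 n x (cap (n + 1) v) := by
  have H := HY_all (n + 1)
  induction x using bmw_ind with
  | halg c =>
    simp only [AlgHom.commutes]
    exact ⟨fun v => (map_smul (cup (n + 1)) c v).symm, fun v => map_smul (cap (n + 1)) c v⟩
  | hT i =>
    have hi := i.2
    rw [hιT, rho_T, rho_T]
    exact ⟨fun v => H.hl.TC1 i (n + 1) (by omega) (by omega) (by omega) v,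
      fun v => H.hl.TK1 i (n + 1) (by omega) (by omega) (by omega) v⟩
  | hS i =>
    have hi := i.2
    rw [hιS, rho_S, rho_S]
    exact ⟨fun v => SC1 H.h0 H.h1 H.hl i (n + 1) (by omega) (by omega) (by omega) v,
      fun v => SK1 H.h0 H.h1 H.hl i (n + 1) (by omega) (by omega) (by omega) v⟩
  | hadd x y hx hy =>
    simp only [map_add, LinearMap.add_apply, hx.1, hx.2, hy.1, hy.2, implies_true, and_self]
  | hmul x y hx hy =>
    simp only [map_mul, Module.End.mul_apply, hx.1, hx.2, hy.1, hy.2, implies_true, and_self]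

theorem tr_markov (hd : (d : ℂ) ≠ 0) (ι : ∀ k : ℕ, BMW r q (k + 1) →ₐ[ℂ] BMW r q (k + 2))
    (hιT : ∀ (k : ℕ) (i : Fin ((k + 1) - 1)),
      ι k (BMW.T r q (k + 1) i) = BMW.T r q (k + 2) (Fin.castLE (Nat.le_succ k) i))
    (hιS : ∀ (k : ℕ) (i : Fin ((k + 1) - 1)),
      ι k (BMW.S r q (k + 1) i) = BMW.S r q (k + 2) (Fin.castLE (Nat.le_succ k) i)) (n : ℕ)
    (a b : BMW r q (n + 1)) (y : BMW r q (n + 2)) (c : ℂ)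
    (hy : ∀ v, cap (n + 1) (rho hz hz0 (n + 1) y (cup (n + 1) v)) = c • v) :
    tr hz hz0 (n + 1) (ι n a * y * ι n b) = c / d * tr hz hz0 n (a * b) := by
  rw [tr_apply, tr_apply, map_mul, map_mul, map_mul, Module.End.mul_apply, Module.End.mul_apply,
    Module.End.mul_apply, K_succ, C_succ (n + 1), (rho_cup hz hz0 ι hιT hιS n b).1,
    (rho_cup hz hz0 ι hιT hιS n a).2, hy, map_smul, map_smul, smul_eq_mul]
  field_simp
  ring

theorem tr_isMarkov (hd : (d : ℂ) ≠ 0) (hd' : (d : ℂ) = (r - r⁻¹) / (q - q⁻¹) + 1)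
    (ι : ∀ k : ℕ, BMW r q (k + 1) →ₐ[ℂ] BMW r q (k + 2))
    (hιT : ∀ (k : ℕ) (i : Fin ((k + 1) - 1)),
      ι k (BMW.T r q (k + 1) i) = BMW.T r q (k + 2) (Fin.castLE (Nat.le_succ k) i))
    (hιS : ∀ (k : ℕ) (i : Fin ((k + 1) - 1)),
      ι k (BMW.S r q (k + 1) i) = BMW.S r q (k + 2) (Fin.castLE (Nat.le_succ k) i)) :
    IsMarkovTrace r q ι (tr hz hz0) := by
  refine ⟨?_, fun n a b => ⟨?_, ?_, ?_⟩⟩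
  · rw [tr_apply, map_one, Module.End.one_apply, C_succ, K_succ,
      (HY_all 0).hl.a0 0 le_rfl le_rfl, map_smul, smul_eq_mul]
    have : K 0 (C 0) = 1 := rfl
    rw [this, mul_one, zero_add, pow_one, inv_mul_cancel₀ hd]
  · have := tr_markov hz hz0 hd ι hιT hιS n a b 1 d (fun v => by
      rw [map_one, Module.End.one_apply, (HY_all (n + 1)).hl.a0 _ (by omega) (by omega)])
    rw [mul_one, div_self hd, one_mul] at this
    exact this
  · rw [← hd']
    refine tr_markov hz hz0 hd ι hιT hιS n a b _ r (fun v => ?_)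
    rw [rho_T, kTc1 (HY_all (n + 1)).h1 (HY_all (n + 1)).hl n (by omega) (by omega)]
  · rw [← hd']
    refine tr_markov hz hz0 hd ι hιT hιS n a b _ 1 (fun v => ?_)
    rw [rho_E, (HY_all (n + 1)).hl.a1 n (by omega) (by omega),
      (HY_all (n + 1)).hl.a2 n (by omega) (by omega), one_smul]

end
/-! ### Spanning and uniqueness -/

/-- Two neighbouring generators. -/
structure BR {A : Type*} [Ring A] [Algebra ℂ A] (r s z : ℂ) (t t' U U' e E : A) : Prop where
  z0 : z ≠ 0
  rs : r * s = 1
  tt : t * t' = 1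
  tt' : t' * t = 1
  UU : U * U' = 1
  UU' : U' * U = 1
  br : t * (U * t) = U * (t * U)
  he : t - t' = z • (1 - e)
  hE : U - U' = z • (1 - E)
  EU : E * U = s • E
  EtE : E * (t * E) = r • E
  EtE' : E * (t' * E) = s • E

namespace BR
variable {A : Type*} [Ring A] [Algebra ℂ A] {r s z : ℂ} {t t' U U' e E : A}

theorem conj {V X X' Y Y' : A} (z0 : z ≠ 0) (hX : X' * X = 1) (hX2 : X * X' = 1)
    (hY : Y * Y' = 1) (hY2 : Y' * Y = 1)
    (h1 : X - X' = z • (1 - e)) (h2 : Y - Y' = z • (1 - E)) (h : V * X = Y * V) :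
    V * e = E * V := by
  have h' : V * X' = Y' * V := by
    have : Y' * (V * X) * X' = Y' * (Y * V) * X' := by rw [h]
    rw [← mul_assoc Y' Y, hY2, one_mul, mul_assoc Y', mul_assoc V, hX2, mul_one] at this
    exact this.symm
  have h3 : V * (X - X') = (Y - Y') * V := by rw [mul_sub, sub_mul, h, h']
  rw [h1, h2, mul_smul_comm, smul_mul_assoc] at h3
  have h4 := smul_right_injective A z0 h3
  rw [mul_sub, sub_mul, mul_one, one_mul] at h4
  exact sub_right_injective h4

variable (H : BR r s z t t' U U' e E)

theorem UE (H : BR r s z t t' U U' e E) : U * E = s • E := by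
  rw [← H.EU]
  exact conj H.z0 H.UU' H.UU H.UU H.UU' H.hE H.hE rfl

theorem EU' (H : BR r s z t t' U U' e E) : E * U' = r • E := by
  have : s • (E * U') = E := by rw [← smul_mul_assoc, ← H.EU, mul_assoc, H.UU, mul_one]
  conv_rhs => rw [← this, smul_smul, H.rs, one_smul]

theorem UiE (H : BR r s z t t' U U' e E) : U' * E = r • E := by
  have : s • (U' * E) = E := by rw [← mul_smul_comm, ← H.UE, ← mul_assoc, H.UU', one_mul]
  conv_rhs => rw [← this, smul_smul, H.rs, one_smul]

theorem UtE (H : BR r s z t t' U U' e E) : U * (t * E) = e * (U * t) := by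
  have := conj (V := U * t) H.z0 H.UU' H.UU H.tt H.tt' H.hE H.he (by rw [mul_assoc, H.br])
  rw [← this, mul_assoc]

theorem tUe (H : BR r s z t t' U U' e E) : t * (U * e) = E * (t * U) := by
  have := conj (V := t * U) H.z0 H.tt' H.tt H.UU H.UU' H.he H.hE (by rw [mul_assoc, H.br])
  rw [← this, mul_assoc]

theorem F1 (H : BR r s z t t' U U' e E) : e = U * (t * (E * (t' * U'))) := by
  have := congrArg (· * (t' * U')) H.UtE
  simp only [mul_assoc] at this
  rw [this, ← mul_assoc t, H.tt, one_mul, H.UU, mul_one]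

theorem F2 (H : BR r s z t t' U U' e E) : e = U' * (t' * (E * (t * U))) := by
  rw [← H.tUe, ← mul_assoc t', H.tt', one_mul, ← mul_assoc, H.UU', one_mul]

theorem Ue (H : BR r s z t t' U U' e E) : U * e = t' * (E * (t * U)) := by
  rw [← H.tUe, ← mul_assoc t', H.tt', one_mul]

theorem UeE (H : BR r s z t t' U U' e E) : U * (e * E) = t' * E := by
  rw [← mul_assoc, H.Ue, mul_assoc, mul_assoc, mul_assoc, H.UE, mul_smul_comm, mul_smul_comm,
    H.EtE, smul_smul, mul_comm s, H.rs, one_smul]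

theorem Ee (H : BR r s z t t' U U' e E) : E * e = E * (t' * U') := by
  conv_lhs => rw [H.F1, ← mul_assoc, H.EU, smul_mul_assoc, ← mul_assoc t, ← mul_assoc E, H.EtE,
    smul_mul_assoc, smul_smul, mul_comm s, H.rs, one_smul]

theorem EeU (H : BR r s z t t' U U' e E) : E * (e * U) = E * t' := by
  rw [← mul_assoc, H.Ee, mul_assoc, mul_assoc, H.UU', mul_one]

theorem EeE (H : BR r s z t t' U U' e E) : E * (e * E) = E := by
  rw [← mul_assoc, H.Ee, mul_assoc, mul_assoc, H.UiE, mul_smul_comm, mul_smul_comm, H.EtE',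
    smul_smul, H.rs, one_smul]

theorem U2 (H : BR r s z t t' U U' e E) : U * U = 1 + z • U - (z * s) • E := by
  have := congrArg (· * U) H.hE
  simp only [sub_mul, smul_mul_assoc, H.EU, H.UU', one_mul] at this
  rw [sub_eq_iff_eq_add.mp this, smul_sub, smul_smul]
  abel

theorem UeU (H : BR r s z t t' U U' e E) :
    U * (e * U) = t' * (E * t) + z • (U * e) - z • (t' * E) := by
  have : U * (e * U) = t' * (E * (t * (U * U))) := by
    rw [← mul_assoc, H.Ue]; simp only [mul_assoc]
  rw [this, H.U2, mul_sub, mul_add, mul_sub, mul_add, mul_sub, mul_add, mul_one, H.Ue,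
    mul_smul_comm, mul_smul_comm, mul_smul_comm, mul_smul_comm, mul_smul_comm, mul_smul_comm,
    H.EtE, mul_smul_comm, smul_smul, mul_assoc, mul_comm s, H.rs, mul_one]

end BR

section uniq
variable {r q : ℂ}

theorem b_TS (n : ℕ) (i) : BMW.T r q n i * BMW.S r q n i = 1 := by
  rw [BMW.T, BMW.S, ← map_mul, RingQuot.mkAlgHom_rel ℂ (BMWRel.inv_right i), map_one]

theorem b_ST (n : ℕ) (i) : BMW.S r q n i * BMW.T r q n i = 1 := by
  rw [BMW.T, BMW.S, ← map_mul, RingQuot.mkAlgHom_rel ℂ (BMWRel.inv_left i), map_one]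

theorem b_E (n : ℕ) (i) : BMW.E r q n i =
    1 - (q - q⁻¹)⁻¹ • (BMW.T r q n i - BMW.S r q n i) := by
  rw [BMW.T, BMW.S, BMW.E, bmwE, map_sub, map_smul, map_sub, map_one]

theorem b_hE (hz : q - q⁻¹ ≠ 0) (n : ℕ) (i) : BMW.T r q n i - BMW.S r q n i =
    (q - q⁻¹) • (1 - BMW.E r q n i) := by
  rw [b_E, sub_sub_cancel, smul_smul, mul_inv_cancel₀ hz, one_smul]

theorem b_S (hz : q - q⁻¹ ≠ 0) (n : ℕ) (i) : BMW.S r q n i =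
    BMW.T r q n i - (q - q⁻¹) • 1 + (q - q⁻¹) • BMW.E r q n i := by
  rw [← sub_sub_cancel (BMW.T r q n i) (BMW.S r q n i), b_hE hz, smul_sub]
  abel

theorem b_comm (n : ℕ) (i j : Fin (n - 1)) (h : (i : ℕ) + 2 ≤ j) :
    BMW.T r q n i * BMW.T r q n j = BMW.T r q n j * BMW.T r q n i := by
  rw [BMW.T, BMW.T, ← map_mul, RingQuot.mkAlgHom_rel ℂ (BMWRel.comm i j h), map_mul]

theorem b_EU (n : ℕ) (i) : BMW.E r q n i * BMW.T r q n i = r⁻¹ • BMW.E r q n i := by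
  rw [BMW.T, BMW.E, ← map_mul, RingQuot.mkAlgHom_rel ℂ (BMWRel.eT i), map_smul]

theorem b_BR (hr : r ≠ 0) (hz : q - q⁻¹ ≠ 0) (n : ℕ) (i j : Fin (n - 1)) (h : (i : ℕ) + 1 = j) :
    BR r r⁻¹ (q - q⁻¹) (BMW.T r q n i) (BMW.S r q n i) (BMW.T r q n j) (BMW.S r q n j)
      (BMW.E r q n i) (BMW.E r q n j) where
  z0 := hz
  rs := mul_inv_cancel₀ hr
  tt := b_TS _ _
  tt' := b_ST _ _
  UU := b_TS _ _
  UU' := b_ST _ _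
  br := by
    rw [BMW.T, BMW.T, ← mul_assoc, ← mul_assoc, ← map_mul, ← map_mul,
      RingQuot.mkAlgHom_rel ℂ (BMWRel.braid i j h), map_mul, map_mul]
  he := b_hE hz _ _
  hE := b_hE hz _ _
  EU := b_EU _ _
  EtE := by
    rw [BMW.T, BMW.E, ← mul_assoc, ← map_mul, ← map_mul,
      RingQuot.mkAlgHom_rel ℂ (BMWRel.eTe i j h), map_smul]
  EtE' := by
    rw [BMW.S, BMW.E, ← mul_assoc, ← map_mul, ← map_mul,
      RingQuot.mkAlgHom_rel ℂ (BMWRel.eSe i j h), map_smul]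

/-- The last generator. -/
noncomputable def lT (r q : ℂ) (k : ℕ) : BMW r q (k + 2) := BMW.T r q (k + 2) ⟨k, by omega⟩
/-- The last idempotent. -/
noncomputable def lE (r q : ℂ) (k : ℕ) : BMW r q (k + 2) := BMW.E r q (k + 2) ⟨k, by omega⟩
/-- The last inverse generator. -/
noncomputable def lS (r q : ℂ) (k : ℕ) : BMW r q (k + 2) := BMW.S r q (k + 2) ⟨k, by omega⟩

theorem l_sq (hr : r ≠ 0) (hz : q - q⁻¹ ≠ 0) (k : ℕ) :
    ∃ a b c : ℂ, lT r q k * lT r q k = a • 1 + b • lT r q k + c • lE r q k ∧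
      lT r q k * lE r q k = r⁻¹ • lE r q k ∧ lE r q k * lT r q k = r⁻¹ • lE r q k ∧
      ∃ f : ℂ, lE r q k * lE r q k = f • lE r q k := by
  have h1 : lE r q k * lT r q k = r⁻¹ • lE r q k := b_EU _ _
  have hE : lT r q k - lS r q k = (q - q⁻¹) • (1 - lE r q k) := b_hE hz _ _
  have h2 : lT r q k * lS r q k = 1 := b_TS _ _
  have h3 : lS r q k * lT r q k = 1 := b_ST _ _
  have h4 : lT r q k * lE r q k = r⁻¹ • lE r q k := by
    rw [← h1]
    exact BR.conj hz h3 h2 h2 h3 hE hE rfl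
  have h5 : lS r q k * lE r q k = r • lE r q k := by
    have : r⁻¹ • (lS r q k * lE r q k) = lE r q k := by
      rw [← mul_smul_comm, ← h4, ← mul_assoc, h3, one_mul]
    conv_rhs => rw [← this, smul_smul, mul_inv_cancel₀ hr, one_smul]
  refine ⟨1, q - q⁻¹, -((q - q⁻¹) * r⁻¹), ?_, h4, h1, 1 - (q - q⁻¹)⁻¹ * (r⁻¹ - r), ?_⟩
  · have := congrArg (· * lT r q k) hE
    simp only [sub_mul, smul_mul_assoc, h1, h3, one_mul] at this
    rw [sub_eq_iff_eq_add.mp this, smul_sub, smul_smul]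
    module
  · have h : lE r q k = 1 - (q - q⁻¹)⁻¹ • (lT r q k - lS r q k) := b_E _ _
    have h' : lE r q k * lE r q k =
        (1 - (q - q⁻¹)⁻¹ • (lT r q k - lS r q k)) * lE r q k := by rw [← h]
    rw [h', sub_mul, one_mul, smul_mul_assoc, sub_mul, h4, h5]
    module

/-- The spanning set. -/
def Gs (ι : ∀ k : ℕ, BMW r q (k + 1) →ₐ[ℂ] BMW r q (k + 2)) (k : ℕ) : Set (BMW r q (k + 2)) :=
  {x | ∃ (a b : BMW r q (k + 1)) (X : BMW r q (k + 2)),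
    (X = 1 ∨ X = lT r q k ∨ X = lE r q k) ∧ x = ι k a * (X * ι k b)}

/-- The span. -/
def W (ι : ∀ k : ℕ, BMW r q (k + 1) →ₐ[ℂ] BMW r q (k + 2)) (k : ℕ) :
    Submodule ℂ (BMW r q (k + 2)) := Submodule.span ℂ (Gs ι k)

variable (ι : ∀ k : ℕ, BMW r q (k + 1) →ₐ[ℂ] BMW r q (k + 2))

theorem W_mul (k : ℕ) (a b : BMW r q (k + 1)) (x : BMW r q (k + 2)) (hx : x ∈ W ι k) :
    ι k a * (x * ι k b) ∈ W ι k := by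
  induction hx using Submodule.span_induction with
  | mem x h =>
    obtain ⟨c, d, X, hX, rfl⟩ := h
    refine Submodule.subset_span ⟨a * c, d * b, X, hX, ?_⟩
    simp only [map_mul, mul_assoc]
  | zero => simp
  | add x y _ _ hx hy => rw [add_mul, mul_add]; exact add_mem hx hy
  | smul c x _ hx => rw [smul_mul_assoc, mul_smul_comm]; exact Submodule.smul_mem _ c hx

theorem W_l (k : ℕ) (a : BMW r q (k + 1)) (x : BMW r q (k + 2)) (hx : x ∈ W ι k) :
    ι k a * x ∈ W ι k := by
  simpa using W_mul ι k a 1 x hx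

theorem W_r (k : ℕ) (a : BMW r q (k + 1)) (x : BMW r q (k + 2)) (hx : x ∈ W ι k) :
    x * ι k a ∈ W ι k := by
  simpa using W_mul ι k 1 a x hx

theorem W_one (k : ℕ) : 1 ∈ W ι k :=
  Submodule.subset_span ⟨1, 1, 1, Or.inl rfl, by simp⟩
theorem W_T (k : ℕ) : lT r q k ∈ W ι k :=
  Submodule.subset_span ⟨1, 1, _, Or.inr (Or.inl rfl), by simp⟩
theorem W_E (k : ℕ) : lE r q k ∈ W ι k :=
  Submodule.subset_span ⟨1, 1, _, Or.inr (Or.inr rfl), by simp⟩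
theorem W_i (k : ℕ) (a : BMW r q (k + 1)) : ι k a ∈ W ι k := by
  simpa using W_l ι k a 1 (W_one ι k)

/-- The key stability property. -/
theorem W_key (hr : r ≠ 0) (hz : q - q⁻¹ ≠ 0) (k : ℕ)
    (h : ∀ a X Z, (X = 1 ∨ X = lT r q k ∨ X = lE r q k) → (Z = lT r q k ∨ Z = lE r q k) →
      Z * (ι k a * X) ∈ W ι k)
    (hιT : ∀ (k : ℕ) (i : Fin ((k + 1) - 1)),
      ι k (BMW.T r q (k + 1) i) = BMW.T r q (k + 2) (Fin.castLE (Nat.le_succ k) i))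
    (hιS : ∀ (k : ℕ) (i : Fin ((k + 1) - 1)),
      ι k (BMW.S r q (k + 1) i) = BMW.S r q (k + 2) (Fin.castLE (Nat.le_succ k) i)) : W ι k = ⊤ := by
  have hZ : ∀ Z, (Z = lT r q k ∨ Z = lE r q k) → ∀ x ∈ W ι k, Z * x ∈ W ι k := by
    intro Z hZ x hx
    induction hx using Submodule.span_induction with
    | mem x hh =>
      obtain ⟨c, d, X, hX, rfl⟩ := hh
      rw [← mul_assoc (ι k c), ← mul_assoc]
      exact W_r ι k _ _ (h c X Z hX hZ)
    | zero => simp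
    | add x y _ _ hx hy => rw [mul_add]; exact add_mem hx hy
    | smul c x _ hx => rw [mul_smul_comm]; exact Submodule.smul_mem _ c hx
  rw [eq_top_iff]
  rintro x -
  rw [← mul_one x]
  suffices h : ∀ w ∈ W ι k, x * w ∈ W ι k from h 1 (W_one ι k)
  induction x using bmw_ind with
  | halg c =>
    intro w hw
    rw [← Algebra.smul_def]
    exact Submodule.smul_mem _ c hw
  | hT i =>
    intro w hw
    by_cases hi : (i : ℕ) < k
    · have := W_l ι k (BMW.T r q (k + 1) ⟨i, hi⟩) w hw
      rw [hιT] at this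
      exact this
    · have h2 := i.2
      have hik : i = ⟨k, Nat.lt_succ_self k⟩ := Fin.ext (by change (i : ℕ) = k; omega)
      subst hik
      exact hZ _ (Or.inl rfl) w hw
  | hS i =>
    intro w hw
    by_cases hi : (i : ℕ) < k
    · have := W_l ι k (BMW.S r q (k + 1) ⟨i, hi⟩) w hw
      rw [hιS] at this
      exact this
    · have h2 := i.2
      have hik : i = ⟨k, Nat.lt_succ_self k⟩ := Fin.ext (by change (i : ℕ) = k; omega)
      subst hik
      rw [b_S hz, add_mul, sub_mul, smul_mul_assoc, smul_mul_assoc, one_mul]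
      exact add_mem (sub_mem (hZ _ (Or.inl rfl) w hw) (Submodule.smul_mem _ _ hw))
        (Submodule.smul_mem _ _ (hZ _ (Or.inr rfl) w hw))
  | hadd x y hx hy =>
    intro w hw
    rw [add_mul]
    exact add_mem (hx w hw) (hy w hw)
  | hmul x y hx hy =>
    intro w hw
    rw [mul_assoc]
    exact hx _ (hy w hw)

theorem comm_l (k : ℕ) (ι : ∀ k : ℕ, BMW r q (k + 1) →ₐ[ℂ] BMW r q (k + 2))
    (hιT : ∀ (k : ℕ) (i : Fin ((k + 1) - 1)),
      ι k (BMW.T r q (k + 1) i) = BMW.T r q (k + 2) (Fin.castLE (Nat.le_succ k) i))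
    (hιS : ∀ (k : ℕ) (i : Fin ((k + 1) - 1)),
      ι k (BMW.S r q (k + 1) i) = BMW.S r q (k + 2) (Fin.castLE (Nat.le_succ k) i))
    (c : BMW r q (k + 1)) :
    lT r q (k + 1) * ι (k + 1) (ι k c) = ι (k + 1) (ι k c) * lT r q (k + 1) := by
  induction c using bmw_ind with
  | halg c =>
    rw [AlgHom.commutes, AlgHom.commutes]
    exact (Algebra.commutes _ _).symm
  | hT i =>
    have hi := i.2
    rw [hιT, hιT]
    exact (b_comm _ _ _ (by change (i : ℕ) + 2 ≤ k + 1; omega)).symm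
  | hS i =>
    have hi := i.2
    rw [hιS, hιS]
    set j : Fin (k + 1 + 2 - 1) :=
      Fin.castLE (Nat.le_succ (k + 1)) (Fin.castLE (Nat.le_succ k) i : Fin (k + 2 - 1))
    have h : BMW.T r q _ j * lT r q (k + 1) = lT r q (k + 1) * BMW.T r q _ j :=
      b_comm _ _ _ (by change (i : ℕ) + 2 ≤ k + 1; omega)
    have := congrArg (fun x => BMW.S r q _ j * (x * BMW.S r q _ j)) h
    simp only [mul_assoc] at this
    rw [b_TS, mul_one, ← mul_assoc, b_ST, one_mul] at this
    exact this
  | hadd x y hx hy => simp only [map_add, mul_add, add_mul, hx, hy]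
  | hmul x y hx hy =>
    simp only [map_mul]
    rw [← mul_assoc, hx, mul_assoc, hy, mul_assoc]

theorem comm_lE (hz : q - q⁻¹ ≠ 0) (k : ℕ) (x : BMW r q (k + 2))
    (h : lT r q k * x = x * lT r q k) : lE r q k * x = x * lE r q k := by
  have h2 : lT r q k * lS r q k = 1 := b_TS _ _
  have h3 : lS r q k * lT r q k = 1 := b_ST _ _
  exact (BR.conj hz h3 h2 h2 h3 (b_hE hz _ _) (b_hE hz _ _) h.symm).symm

theorem W_top (hr : r ≠ 0) (hz : q - q⁻¹ ≠ 0)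
    (hιT : ∀ (k : ℕ) (i : Fin ((k + 1) - 1)),
      ι k (BMW.T r q (k + 1) i) = BMW.T r q (k + 2) (Fin.castLE (Nat.le_succ k) i))
    (hιS : ∀ (k : ℕ) (i : Fin ((k + 1) - 1)),
      ι k (BMW.S r q (k + 1) i) = BMW.S r q (k + 2) (Fin.castLE (Nat.le_succ k) i)) (k : ℕ) :
    W ι k = ⊤ := by
  have base : ∀ k X Z, (X = 1 ∨ X = lT r q k ∨ X = lE r q k) → (Z = lT r q k ∨ Z = lE r q k) →
      Z * X ∈ W ι k := by
    intro k X Z hX hZ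
    obtain ⟨a, b, c, h1, h2, h3, f, h4⟩ := l_sq hr hz k
    rcases hX with rfl | rfl | rfl <;> rcases hZ with rfl | rfl
    · rw [mul_one]; exact W_T ι k
    · rw [mul_one]; exact W_E ι k
    · rw [h1]
      exact add_mem (add_mem (Submodule.smul_mem _ _ (W_one ι k))
        (Submodule.smul_mem _ _ (W_T ι k))) (Submodule.smul_mem _ _ (W_E ι k))
    · rw [h3]; exact Submodule.smul_mem _ _ (W_E ι k)
    · rw [h2]; exact Submodule.smul_mem _ _ (W_E ι k)
    · rw [h4]; exact Submodule.smul_mem _ _ (W_E ι k)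
  induction k with
  | zero =>
    refine W_key ι hr hz 0 (fun a X Z hX hZ => ?_) hιT hιS
    have : ∃ c : ℂ, a = algebraMap ℂ _ c := by
      induction a using bmw_ind with
      | halg c => exact ⟨c, rfl⟩
      | hT i => exact i.elim0
      | hS i => exact i.elim0
      | hadd x y hx hy =>
        obtain ⟨c, rfl⟩ := hx
        obtain ⟨d, rfl⟩ := hy
        exact ⟨c + d, (map_add _ _ _).symm⟩
      | hmul x y hx hy =>
        obtain ⟨c, rfl⟩ := hx
        obtain ⟨d, rfl⟩ := hy
        exact ⟨c * d, (map_mul _ _ _).symm⟩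
    obtain ⟨c, rfl⟩ := this
    rw [AlgHom.commutes, ← Algebra.smul_def, mul_smul_comm]
    exact Submodule.smul_mem _ _ (base 0 X Z hX hZ)
  | succ k ih =>
    refine W_key ι hr hz (k + 1) (fun a X Z hX hZ => ?_) hιT hιS
    have ha : a ∈ W ι k := ih ▸ Submodule.mem_top
    have htT : ι (k + 1) (lT r q k) = BMW.T r q (k + 3) ⟨k, by omega⟩ := hιT (k + 1) _
    have htS : ι (k + 1) (lS r q k) = BMW.S r q (k + 3) ⟨k, by omega⟩ := hιS (k + 1) _
    have htE : ι (k + 1) (lE r q k) = BMW.E r q (k + 3) ⟨k, by omega⟩ := by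
      have : lE r q k = 1 - (q - q⁻¹)⁻¹ • (lT r q k - lS r q k) := b_E _ _
      rw [this, map_sub, map_smul, map_sub, htT, htS, map_one, b_E]
    have H : BR r r⁻¹ (q - q⁻¹) (ι (k + 1) (lT r q k)) (ι (k + 1) (lS r q k)) (lT r q (k + 1))
        (lS r q (k + 1)) (ι (k + 1) (lE r q k)) (lE r q (k + 1)) := by
      rw [htT, htS, htE]
      exact b_BR hr hz (k + 3) ⟨k, by omega⟩ ⟨k + 1, by omega⟩ rfl
    have WT := W_T ι (k + 1)
    have WE := W_E ι (k + 1)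
    induction ha using Submodule.span_induction with
    | mem x hh =>
      obtain ⟨c, d, Y, hY, rfl⟩ := hh
      have cT := fun c => comm_l k ι hιT hιS c
      have cE := fun c => comm_lE hz (k + 1) _ (cT c)
      have cZ : ∀ c, Z * ι (k + 1) (ι k c) = ι (k + 1) (ι k c) * Z := by
        rcases hZ with rfl | rfl
        · exact cT
        · exact cE
      have cX : ∀ c, ι (k + 1) (ι k c) * X = X * ι (k + 1) (ι k c) := by
        rcases hX with rfl | rfl | rfl
        · intro c; rw [mul_one, one_mul]
        · exact fun c => (cT c).symm
        · exact fun c => (cE c).symm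
      have e : Z * (ι (k + 1) (ι k c * (Y * ι k d)) * X) =
          ι (k + 1) (ι k c) * ((Z * (ι (k + 1) Y * X)) * ι (k + 1) (ι k d)) := by
        rw [map_mul, map_mul, mul_assoc, ← mul_assoc Z, cZ]
        simp only [mul_assoc, cX]
      rw [e]
      refine W_mul ι (k + 1) _ _ _ ?_
      rcases hY with rfl | rfl | rfl
      · rw [map_one, one_mul]
        exact base (k + 1) X Z hX hZ
      · rcases hX with rfl | rfl | rfl
        · rw [mul_one]
          refine W_r ι (k + 1) _ _ ?_
          rcases hZ with rfl | rfl
          exacts [WT, WE]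
        · rcases hZ with rfl | rfl
          · rw [← H.br]; exact W_mul ι (k + 1) _ _ _ WT
          · rw [← H.tUe]; exact W_mul ι (k + 1) _ _ _ WT
        · rcases hZ with rfl | rfl
          · rw [H.UtE]; exact W_mul ι (k + 1) _ _ _ WT
          · rw [H.EtE]; exact Submodule.smul_mem _ _ WE
      · rcases hX with rfl | rfl | rfl
        · rw [mul_one]
          refine W_r ι (k + 1) _ _ ?_
          rcases hZ with rfl | rfl
          exacts [WT, WE]
        · rcases hZ with rfl | rfl
          · rw [H.UeU]
            exact sub_mem (add_mem (W_mul ι (k + 1) _ _ _ WE)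
              (Submodule.smul_mem _ _ (W_r ι (k + 1) _ _ WT)))
              (Submodule.smul_mem _ _ (W_l ι (k + 1) _ _ WE))
          · rw [H.EeU]; exact W_r ι (k + 1) _ _ WE
        · rcases hZ with rfl | rfl
          · rw [H.UeE]; exact W_l ι (k + 1) _ _ WE
          · rw [H.EeE]; exact WE
    | zero => simp
    | add x y _ _ hx hy => rw [map_add, add_mul, mul_add]; exact add_mem hx hy
    | smul c x _ hx =>
      rw [map_smul, smul_mul_assoc, mul_smul_comm]; exact Submodule.smul_mem _ c hx

theorem uniq (hr : r ≠ 0) (hz : q - q⁻¹ ≠ 0)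
    (hιT : ∀ (k : ℕ) (i : Fin ((k + 1) - 1)),
      ι k (BMW.T r q (k + 1) i) = BMW.T r q (k + 2) (Fin.castLE (Nat.le_succ k) i))
    (hιS : ∀ (k : ℕ) (i : Fin ((k + 1) - 1)),
      ι k (BMW.S r q (k + 1) i) = BMW.S r q (k + 2) (Fin.castLE (Nat.le_succ k) i))
    (t1 t2 : ∀ k : ℕ, BMW r q (k + 1) →ₗ[ℂ] ℂ) (h1 : IsMarkovTrace r q ι t1)
    (h2 : IsMarkovTrace r q ι t2) : t1 = t2 := by
  funext k
  induction k with
  | zero =>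
    refine LinearMap.ext fun a => ?_
    induction a using bmw_ind with
    | halg c =>
      rw [Algebra.algebraMap_eq_smul_one, map_smul, map_smul]
      exact congrArg (c • ·) (h1.1.trans h2.1.symm)
    | hT i => exact i.elim0
    | hS i => exact i.elim0
    | hadd x y hx hy => rw [map_add, map_add, hx, hy]
    | hmul x y hx hy =>
      have : ∃ c : ℂ, x = algebraMap ℂ _ c := by
        clear hx
        induction x using bmw_ind with
        | halg c => exact ⟨c, rfl⟩
        | hT i => exact i.elim0
        | hS i => exact i.elim0
        | hadd x y hx hy =>
          obtain ⟨c, rfl⟩ := hx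
          obtain ⟨d, rfl⟩ := hy
          exact ⟨c + d, (map_add _ _ _).symm⟩
        | hmul x y hx hy =>
          obtain ⟨c, rfl⟩ := hx
          obtain ⟨d, rfl⟩ := hy
          exact ⟨c * d, (map_mul _ _ _).symm⟩
      obtain ⟨c, rfl⟩ := this
      rw [← Algebra.smul_def, map_smul, map_smul, hy]
  | succ k ih =>
    refine LinearMap.ext_on (W_top ι hr hz hιT hιS k) ?_
    rintro x ⟨a, b, X, hX, rfl⟩
    have m1 := h1.2 k a b
    have m2 := h2.2 k a b
    rw [← mul_assoc]
    rcases hX with rfl | rfl | rfl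
    · rw [mul_one, m1.1, m2.1, ih]
    · rw [lT, m1.2.1, m2.2.1, ih]
    · rw [lE, m1.2.2, m2.2.2, ih]

end uniq

theorem main (q : ℂ) (hz : z = q - q⁻¹) (hz0 : (z : ℂ) ≠ 0) (hd : (d : ℂ) ≠ 0)
    (hd' : (d : ℂ) = (r - r⁻¹) / (q - q⁻¹) + 1)
    (ι : ∀ k : ℕ, BMW r q (k + 1) →ₐ[ℂ] BMW r q (k + 2))
    (hιT : ∀ (k : ℕ) (i : Fin ((k + 1) - 1)),
      ι k (BMW.T r q (k + 1) i) = BMW.T r q (k + 2) (Fin.castLE (Nat.le_succ k) i))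
    (hιS : ∀ (k : ℕ) (i : Fin ((k + 1) - 1)),
      ι k (BMW.S r q (k + 1) i) = BMW.S r q (k + 2) (Fin.castLE (Nat.le_succ k) i)) :
    ∃ tr : ∀ k : ℕ, BMW r q (k + 1) →ₗ[ℂ] ℂ,
      IsMarkovTrace r q ι tr ∧
      (∀ (k : ℕ) (x y : BMW r q (k + 1)), tr k (x * y) = tr k (y * x)) ∧
      ∀ tr' : ∀ k : ℕ, BMW r q (k + 1) →ₗ[ℂ] ℂ, IsMarkovTrace r q ι tr' → tr' = tr :=
  ⟨tr hz hz0, tr_isMarkov hz hz0 hd hd' ι hιT hιS, tr_comm hz hz0, fun t' ht' =>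
    uniq ι (left_ne_zero_of_mul_eq_one rs) (hz ▸ hz0) hιT hιS t' _ ht'
      (tr_isMarkov hz hz0 hd hd' ι hιT hιS)⟩

end BT

/-- For nonzero `r, q` with `q² ≠ 1` and
`d = (r − r⁻¹)/(q − q⁻¹) + 1 ≠ 0`, there is a unique sequence of ℂ-linear functionals
`tr_n : D_n(r,q) → ℂ` satisfying `tr_1(1) = 1` and the Markov conditions, and moreover
each `tr_n` is a trace functional: `tr_n(xy) = tr_n(yx)`. -/
theorem stmt_16 (r q : ℂ) (hr : r ≠ 0) (hq : q ≠ 0) (hq2 : q ^ 2 ≠ 1)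
    (hd : (r - r⁻¹) / (q - q⁻¹) + 1 ≠ 0)
    (ι : ∀ k : ℕ, BMW r q (k + 1) →ₐ[ℂ] BMW r q (k + 2))
    (hιT : ∀ (k : ℕ) (i : Fin ((k + 1) - 1)),
      ι k (BMW.T r q (k + 1) i) = BMW.T r q (k + 2) (Fin.castLE (by omega) i))
    (hιS : ∀ (k : ℕ) (i : Fin ((k + 1) - 1)),
      ι k (BMW.S r q (k + 1) i) = BMW.S r q (k + 2) (Fin.castLE (by omega) i)) :
    ∃ tr : ∀ k : ℕ, BMW r q (k + 1) →ₗ[ℂ] ℂ,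
      IsMarkovTrace r q ι tr ∧
      (∀ (k : ℕ) (x y : BMW r q (k + 1)), tr k (x * y) = tr k (y * x)) ∧
      ∀ tr' : ∀ k : ℕ, BMW r q (k + 1) →ₗ[ℂ] ℂ, IsMarkovTrace r q ι tr' → tr' = tr := by
  have hz : q - q⁻¹ ≠ 0 := by
    intro h
    apply hq2
    have h2 : q * (q - q⁻¹) = 0 := by rw [h, mul_zero]
    rw [mul_sub, mul_inv_cancel₀ hq] at h2
    rw [pow_two]
    exact sub_eq_zero.mp h2
  exact @BT.main (BPar.mk r r⁻¹ (q - q⁻¹) ((r - r⁻¹) / (q - q⁻¹) + 1) (mul_inv_cancel₀ hr)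
    (by rw [mul_add, mul_div_cancel₀ _ hz, mul_one])) q rfl hz hd rfl ι hιT hιS
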